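/- arXiv:1710.03284 — 3 statements merged into one kernel-verified Lean document; each statement's English description precedes it below -/
import Mathlib

section
/- Let 1 ≤ N < L be integers and let z, z′ be nonzero complex numbers with z^L ≠ (z′)^L. Let w_1,…,w_N ∈ ℂ satisfy w_j^N (w_j+1)^{L−N} = z^L for every j, and let w′_1,…,w′_N ∈ ℂ satisfy (w′_j)^N (w′_j+1)^{L−N} = (z′)^L for every j (so automatically all w_j, w′_j ∉ {0,−1} and w_i ≠ w′_{i′} for all i,i′). Then for every integer a, the finite sum H_a(W;W′) := ∑_{X ∈ 𝒳_N(L), x_1 = a} R_X(W)·L_X(W′) equals −((z′/z)^L − 1)^{N−1} · ( ∏_{j=1}^N [w′_j (w′_j+1)^{a−1}] / [w_j (w_j+1)^{a−2}] − ∏_{j=1}^N [w′_j (w′_j+1)^{a}] / [w_j (w_j+1)^{a−1}] ) · det[ 1/(w′_{i′} − w_i) ]_{i,i′=1}^N, where rows of the determinant are indexed by i and columns by i′. -/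
open scoped BigOperators

/-- The configuration space `𝒳_N(L)`: strictly increasing `N`-tuples of integers
whose entries all lie within a window of length `L` (equivalently,
`x_1 < x_2 < ⋯ < x_N < x_1 + L`). -/
def XNL (N L : ℕ) : Set (Fin N → ℤ) :=
  {X | StrictMono X ∧ ∀ i j, X i < X j + (L : ℤ)}

/-- `L_X(W) = det[w_i^j (w_i+1)^{x_j - j}]_{i,j=1}^N` (1-based indices, integer powers). -/
noncomputable def LXdet {N : ℕ} (X : Fin N → ℤ) (w : Fin N → ℂ) : ℂ :=
  Matrix.det (Matrix.of fun i j : Fin N =>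
    w i ^ (((j : ℕ) : ℤ) + 1) * (w i + 1) ^ (X j - (((j : ℕ) : ℤ) + 1)))

/-- `R_X(W) = det[w_i^{-j} (w_i+1)^{-x_j + j}]_{i,j=1}^N` (1-based indices, integer powers). -/
noncomputable def RXdet {N : ℕ} (X : Fin N → ℤ) (w : Fin N → ℂ) : ℂ :=
  Matrix.det (Matrix.of fun i j : Fin N =>
    w i ^ (-(((j : ℕ) : ℤ) + 1)) * (w i + 1) ^ (-(X j) + (((j : ℕ) : ℤ) + 1)))

/-!
In the tensor square of the exterior algebra the tensors `u ⊗ v` of two vectors commute and square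
to zero, and the product of `N` of them has top coefficient `det u * det v`. If a sequence of such
forms obeys the difference relations satisfied by the columns of `R_X(W)` and `L_X(W')`, then
summing their product over increasing positions telescopes one position at a time, each time
raising the exponent of a single form `S(p)`: the sum with first position `a` is
`(S(a - 1) ^ N - S(a) ^ N) / N!`. As `S(p)` is the form of a matrix `K(p)`, this gives
`H_a = det K(a - 1) - det K(a)`.

The entries of `K(p)` are geometric sums. The equations for `W` and `W'` remove the dependence on
the far end `a + L`, leaving `K(p) = (ρ c d - g h) C` entrywise, with `ρ = (z' / z) ^ L` and `C` the
Cauchy matrix. Since `g h C - c d C` has rank one, `K(p)` is a rank-one perturbation of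
`(ρ - 1) c d C`, and its determinant is read off because `det` is affine along rank-one directions.
-/

section SquareZero

variable {A : Type*} [CommRing A]

theorem add_pow_succ_of_sq_eq_zero {q : A} (hq : q * q = 0) (x : A) (n : ℕ) :
    (x + q) ^ (n + 1) = x ^ (n + 1) + (n + 1) * (q * x ^ n) := by
  have h := Polynomial.eval_add_of_sq_eq_zero (Polynomial.X ^ (n + 1)) x q (by rw [sq, hq])
  simp only [Polynomial.eval_pow, Polynomial.eval_X, Polynomial.derivative_X_pow_succ,
    Polynomial.eval_mul, Polynomial.eval_C] at h
  linear_combination h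

theorem mul_sub_pow_of_mul_eq_zero {q y : A} (h : q * y = 0) (x : A) (n : ℕ) :
    q * (x - y) ^ n = q * x ^ n := by
  induction n with
  | zero => simp
  | succ n ih =>
    rw [pow_succ, ← mul_assoc, ih]
    linear_combination -x ^ n * h

theorem sum_pow_card_succ_eq_zero {ι : Type*} (s : Finset ι) {e : ι → A}
    (he : ∀ i, e i * e i = 0) : (∑ i ∈ s, e i) ^ (s.card + 1) = 0 := by
  classical
  induction s using Finset.induction_on with
  | empty => simp
  | insert i s hi ih =>
    rw [Finset.sum_insert hi, Finset.card_insert_of_notMem hi, add_comm (e i),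
      add_pow_succ_of_sq_eq_zero (he i), pow_succ _ (s.card + 1), ih]
    simp

theorem sum_pow_card_eq_factorial_smul_prod {ι : Type*} (s : Finset ι) {e : ι → A}
    (he : ∀ i, e i * e i = 0) :
    (∑ i ∈ s, e i) ^ s.card = s.card.factorial • ∏ i ∈ s, e i := by
  classical
  induction s using Finset.induction_on with
  | empty => simp
  | insert i s hi ih =>
    rw [Finset.sum_insert hi, Finset.card_insert_of_notMem hi, Finset.prod_insert hi,
      add_comm (e i), add_pow_succ_of_sq_eq_zero (he i), sum_pow_card_succ_eq_zero s he, ih,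
      Nat.factorial_succ]
    simp only [nsmul_eq_mul, Nat.cast_mul, Nat.cast_succ]
    ring

end SquareZero

section Tuples

theorem sum_Ioo_add_one_sub {A : Type*} [AddCommGroup A] (F : ℤ → A) {p B : ℤ} (h : p < B) :
    ∑ x ∈ Finset.Ioo p B, (F (x + 1) - F x) = F B - F (p + 1) := by
  induction B, Int.add_one_le_of_lt h using Int.leInduction with
  | base => simp [← Finset.Ico_succ_left_eq_Ioo]
  | succ B hB ih =>
    have hinsert : Finset.Ioo p (B + 1) = insert B (Finset.Ioo p B) := by
      ext x
      simp only [Finset.mem_insert, Finset.mem_Ioo]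
      omega
    rw [hinsert, Finset.sum_insert (by simp), ih hB]
    abel

open Classical in
/-- The strictly increasing `m`-tuples of integers in the open interval `(p, B)`. -/
noncomputable def increasingTuples (m : ℕ) (p B : ℤ) : Finset (Fin m → ℤ) :=
  {X ∈ Fintype.piFinset fun _ => Finset.Ioo p B | StrictMono X}

theorem mem_increasingTuples {m : ℕ} {p B : ℤ} {X : Fin m → ℤ} :
    X ∈ increasingTuples m p B ↔ (∀ i, p < X i ∧ X i < B) ∧ StrictMono X := by
  simp [increasingTuples]

theorem cons_mem_increasingTuples {m : ℕ} {p B x : ℤ} {Y : Fin m → ℤ} :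
    (Fin.cons x Y : Fin (m + 1) → ℤ) ∈ increasingTuples (m + 1) p B ↔
      x ∈ Finset.Ioo p B ∧ Y ∈ increasingTuples m x B := by
  simp only [mem_increasingTuples, Finset.mem_Ioo, Fin.forall_fin_succ, Fin.cons_zero,
    Fin.cons_succ, Fin.strictMono_cons]
  exact ⟨fun ⟨⟨hx, hY⟩, hxY, hmono⟩ => ⟨hx, fun i => ⟨hxY i, (hY i).2⟩, hmono⟩,
    fun ⟨hx, hY, hmono⟩ =>
      ⟨⟨hx, fun i => ⟨hx.1.trans (hY i).1, (hY i).2⟩⟩, fun i => (hY i).1, hmono⟩⟩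

theorem sum_increasingTuples_succ {A : Type*} [AddCommMonoid A] (m : ℕ) (p B : ℤ)
    (f : (Fin (m + 1) → ℤ) → A) :
    ∑ X ∈ increasingTuples (m + 1) p B, f X =
      ∑ x ∈ Finset.Ioo p B, ∑ Y ∈ increasingTuples m x B, f (Fin.cons x Y) := by
  rw [Finset.sum_sigma']
  refine (Finset.sum_bij' (fun Y _ => Fin.cons Y.1 Y.2) (fun X _ => ⟨X 0, Fin.tail X⟩)
    ?_ ?_ ?_ ?_ ?_).symm
  · rintro ⟨x, Y⟩ hY
    exact cons_mem_increasingTuples.2 (Finset.mem_sigma.1 hY)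
  · intro X hX
    rw [← Fin.cons_self_tail X] at hX
    exact Finset.mem_sigma.2 (cons_mem_increasingTuples.1 hX)
  · rintro ⟨x, Y⟩ _
    simp
  · intro X _
    exact Fin.cons_self_tail X
  · intro _ _
    rfl

theorem mem_XNL_and_zero_eq_iff {n L : ℕ} (hL : 0 < L) {a : ℤ} {X : Fin (n + 1) → ℤ} :
    X ∈ XNL (n + 1) L ∧ X 0 = a ↔
      X ∈ (increasingTuples n a (a + L)).map ⟨Fin.cons a, Fin.cons_right_injective _⟩ := by
  simp only [Finset.mem_map, Function.Embedding.coeFn_mk, mem_increasingTuples]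
  constructor
  · rintro ⟨⟨hmono, hlt⟩, rfl⟩
    exact ⟨Fin.tail X, ⟨fun i => ⟨hmono (Fin.succ_pos i), hlt _ _⟩,
      hmono.comp Fin.strictMono_succ⟩, Fin.cons_self_tail X⟩
  · rintro ⟨Y, ⟨hY, hmono⟩, rfl⟩
    refine ⟨⟨Fin.strictMono_cons.2 ⟨fun i => (hY i).1, hmono⟩, fun i j => ?_⟩, rfl⟩
    have hrange : ∀ i, a ≤ (Fin.cons a Y : Fin (n + 1) → ℤ) i ∧
        (Fin.cons a Y : Fin (n + 1) → ℤ) i < a + L :=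
      Fin.forall_fin_succ.2 ⟨⟨le_rfl, by simpa using hL⟩, fun i => ⟨(hY i).1.le, (hY i).2⟩⟩
    linarith [(hrange i).2, (hrange j).1]

theorem tsum_XNL_eq_sum {n L : ℕ} (hL : 0 < L) (a : ℤ) {A : Type*} [AddCommMonoid A]
    [TopologicalSpace A] (f : (Fin (n + 1) → ℤ) → A) :
    (∑' X : {X : Fin (n + 1) → ℤ // X ∈ XNL (n + 1) L ∧ X 0 = a}, f X.1) =
      ∑ Y ∈ increasingTuples n a (a + L), f (Fin.cons a Y) := by
  rw [← (Equiv.subtypeEquivRight fun _ => mem_XNL_and_zero_eq_iff hL).symm.tsum_eq]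
  exact (Finset.tsum_subtype _ f).trans (Finset.sum_map _ _ _)

end Tuples

section LevelSum

/-- The sum of `g (u 0 y) (v 0 y)` over `p < y < B`, corrected by `m` boundary terms at `B`. When
`u` and `v` obey the difference relations `u k x = u (k + 1) x - u (k + 1) (x + 1)` and
`v (k + 1) x = v k x - v k (x - 1)`, its powers compute sums over increasing tuples. -/
noncomputable def levelSum {U V A : Type*} [AddCommMonoid A] (g : U → V → A) (u : ℕ → ℤ → U)
    (v : ℕ → ℤ → V) (B : ℤ) (m : ℕ) (p : ℤ) : A :=
  ∑ y ∈ Finset.Ioo p B, g (u 0 y) (v 0 y) +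
    ∑ i ∈ Finset.range m, g (u (i + 1) B) (v i (B - 1))

theorem levelSum_pred {U V A : Type*} [AddCommMonoid A] (g : U → V → A) (u : ℕ → ℤ → U)
    (v : ℕ → ℤ → V) {B p : ℤ} (hp : p < B) (m : ℕ) :
    levelSum g u v B m (p - 1) = levelSum g u v B m p + g (u 0 p) (v 0 p) := by
  have hinsert : Finset.Ioo (p - 1) B = insert p (Finset.Ioo p B) := by
    ext x
    simp only [Finset.mem_insert, Finset.mem_Ioo]
    omega
  rw [levelSum, levelSum, hinsert, Finset.sum_insert (by simp)]
  abel

variable {R U V A : Type*} [CommRing R] [AddCommGroup U] [Module R U] [AddCommGroup V] [Module R V]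
  [CommRing A] [Algebra R A] (g : U →ₗ[R] V →ₗ[R] A)

theorem levelSum_shift {u : ℕ → ℤ → U} {v : ℕ → ℤ → V}
    (hu : ∀ k x, u k x = u (k + 1) x - u (k + 1) (x + 1))
    (hv : ∀ k x, v (k + 1) x = v k x - v k (x - 1)) {B p : ℤ} (hp : p < B) (m : ℕ) :
    levelSum (g · ·) (fun k => u (k + 1)) (fun k => v (k + 1)) B m p =
      levelSum (g · ·) u v B (m + 1) p - g (u 1 (p + 1)) (v 0 p) := by
  have hparts : ∑ y ∈ Finset.Ioo p B, (g (u 1 y) (v 1 y) - g (u 0 y) (v 0 y)) =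
      g (u 1 B) (v 0 (B - 1)) - g (u 1 (p + 1)) (v 0 p) := by
    have htelescope := sum_Ioo_add_one_sub (fun x => g (u 1 x) (v 0 (x - 1))) hp
    rw [add_sub_cancel_right] at htelescope
    rw [← htelescope]
    refine Finset.sum_congr rfl fun y _ => ?_
    rw [hu 0 y, hv 0 y]
    simp only [zero_add, map_sub, LinearMap.sub_apply, add_sub_cancel_right]
    abel
  rw [Finset.sum_sub_distrib] at hparts
  rw [levelSum, levelSum, Finset.sum_range_succ']
  linear_combination hparts

theorem levelSum_sub_one_pow_succ (hg : ∀ x x' y, g x y * g x' y = 0) (u : ℕ → ℤ → U)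
    (v : ℕ → ℤ → V) (B : ℤ) (m : ℕ) :
    levelSum (g · ·) u v B m (B - 1) ^ (m + 1) = 0 := by
  have hempty : Finset.Ioo (B - 1) B = ∅ := by
    ext x
    simp
  simpa [levelSum, hempty] using sum_pow_card_succ_eq_zero (Finset.range m)
    (e := fun i => g (u (i + 1) B) (v i (B - 1))) fun _ => hg _ _ _

theorem levelSum_pred_pow_sub_pow (hg : ∀ x x' y, g x y * g x' y = 0) (u : ℕ → ℤ → U)
    (v : ℕ → ℤ → V) {B p : ℤ} (hp : p < B) (m : ℕ) :
    levelSum (g · ·) u v B m (p - 1) ^ (m + 1) - levelSum (g · ·) u v B m p ^ (m + 1) =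
      (m + 1) * (g (u 0 p) (v 0 p) * levelSum (g · ·) u v B m p ^ m) := by
  rw [levelSum_pred _ _ _ hp, add_pow_succ_of_sq_eq_zero (hg _ _ _), add_sub_cancel_left]

theorem factorial_smul_sum_increasingTuples (hg : ∀ x x' y, g x y * g x' y = 0)
    {u : ℕ → ℤ → U} {v : ℕ → ℤ → V}
    (hu : ∀ k x, u k x = u (k + 1) x - u (k + 1) (x + 1))
    (hv : ∀ k x, v (k + 1) x = v k x - v k (x - 1)) {B p : ℤ} (hp : p < B) (m : ℕ) :
    (m + 1).factorial • ∑ Y ∈ increasingTuples m p B,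
        g (u 0 p) (v 0 p) * ∏ j : Fin m, g (u (j + 1) (Y j)) (v (j + 1) (Y j)) =
      levelSum (g · ·) u v B m (p - 1) ^ (m + 1) - levelSum (g · ·) u v B m p ^ (m + 1) := by
  induction m generalizing u v p with
  | zero =>
    have huniv : increasingTuples 0 p B = Finset.univ := by
      ext X
      simp [mem_increasingTuples, Subsingleton.strictMono, eq_iff_true_of_subsingleton]
    simp [huniv, levelSum_pred _ _ _ hp]
  | succ m ih =>
    set S : ℤ → A := levelSum (g · ·) (fun k => u (k + 1)) (fun k => v (k + 1)) B m with hS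
    have htail : (m + 1).factorial • ∑ Y ∈ increasingTuples (m + 1) p B,
        ∏ j : Fin (m + 1), g (u (j + 1) (Y j)) (v (j + 1) (Y j)) = S p ^ (m + 1) := by
      have hsummand : ∀ x ∈ Finset.Ioo p B, (m + 1).factorial • ∑ Y ∈ increasingTuples m x B,
          ∏ j : Fin (m + 1), g (u (j + 1) ((Fin.cons x Y : Fin (m + 1) → ℤ) j))
            (v (j + 1) ((Fin.cons x Y : Fin (m + 1) → ℤ) j)) =
          S (x - 1) ^ (m + 1) - S x ^ (m + 1) := by
        intro x hx
        rw [hS, ← ih (fun k => hu (k + 1)) (fun k => hv (k + 1)) (Finset.mem_Ioo.1 hx).2]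
        simp [Fin.prod_univ_succ]
      have htelescope := sum_Ioo_add_one_sub (fun x => S (x - 1) ^ (m + 1)) hp
      rw [hS, levelSum_sub_one_pow_succ g hg, zero_sub, ← hS] at htelescope
      simp only [add_sub_cancel_right] at htelescope
      rw [sum_increasingTuples_succ, Finset.smul_sum, Finset.sum_congr rfl hsummand,
        ← neg_inj, ← htelescope, ← Finset.sum_neg_distrib]
      simp only [neg_sub]
    rw [← Finset.mul_sum, Nat.factorial_succ, mul_smul, ← mul_smul_comm, htail, hS,
      levelSum_shift g hu hv hp, mul_sub_pow_of_mul_eq_zero (hg _ _ _),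
      levelSum_pred_pow_sub_pow g hg u v hp, nsmul_eq_mul, Nat.cast_succ]

end LevelSum

section DoubleForms

open scoped TensorProduct

section Algebra

open scoped IsMulCommutative

variable (R : Type*) [CommRing R] (M N : Type*) [AddCommGroup M] [Module R M] [AddCommGroup N]
  [Module R N]

theorem ι_mul_ι_eq_neg (x y : M) : ExteriorAlgebra.ι R x * ExteriorAlgebra.ι R y =
    -(ExteriorAlgebra.ι R y * ExteriorAlgebra.ι R x) :=
  eq_neg_of_add_eq_zero_left (ExteriorAlgebra.ι_add_mul_swap x y)

/-- The diagonal double forms, as the subalgebra of `⋀M ⊗ ⋀N` generated by the tensors of a vector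
of `M` with a vector of `N`; unlike the whole of `⋀M ⊗ ⋀N` it is commutative. -/
def diagonalSubalgebra : Subalgebra R (ExteriorAlgebra R M ⊗[R] ExteriorAlgebra R N) :=
  Algebra.adjoin R (Set.range fun p : M × N => ExteriorAlgebra.ι R p.1 ⊗ₜ ExteriorAlgebra.ι R p.2)

-- The anticommutation signs of the two tensor factors cancel.
instance : IsMulCommutative (diagonalSubalgebra R M N) := by
  refine Algebra.isMulCommutative_adjoin R ?_
  rintro _ ⟨p, rfl⟩ _ ⟨q, rfl⟩
  rw [Algebra.TensorProduct.tmul_mul_tmul, Algebra.TensorProduct.tmul_mul_tmul,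
    ι_mul_ι_eq_neg R M p.1, ι_mul_ι_eq_neg R N p.2, TensorProduct.neg_tmul,
    TensorProduct.tmul_neg, neg_neg]

/-- The commutative algebra of diagonal double forms, in which products of pairs of determinants
are computed. It is a type of its own rather than a subalgebra of the noncommutative `⋀M ⊗ ⋀N` so
that instance search does not unfold it. -/
def DiagonalDoubleForm : Type _ := diagonalSubalgebra R M N

namespace DiagonalDoubleForm

noncomputable instance : CommRing (DiagonalDoubleForm R M N) :=
  inferInstanceAs (CommRing (diagonalSubalgebra R M N))

noncomputable instance : Algebra R (DiagonalDoubleForm R M N) :=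
  inferInstanceAs (Algebra R (diagonalSubalgebra R M N))

/-- The inclusion of the diagonal double forms in `⋀M ⊗ ⋀N`. -/
noncomputable def val :
    DiagonalDoubleForm R M N →ₐ[R] ExteriorAlgebra R M ⊗[R] ExteriorAlgebra R N :=
  (diagonalSubalgebra R M N).val

variable {M N}

/-- The double form `u ⊗ v`, bilinear in the vectors `u` and `v`. -/
noncomputable def rankOne : M →ₗ[R] N →ₗ[R] DiagonalDoubleForm R M N :=
  let ιTensor := (TensorProduct.mk R (ExteriorAlgebra R M) (ExteriorAlgebra R N)).compl₁₂
    (ExteriorAlgebra.ι R) (ExteriorAlgebra.ι R)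
  LinearMap.mk₂ R (fun u v => ⟨ιTensor u v, Algebra.subset_adjoin ⟨(u, v), rfl⟩⟩)
    (fun u u' v => Subtype.ext (ιTensor.map_add₂ u u' v))
    (fun c u v => Subtype.ext (ιTensor.map_smul₂ c u v))
    (fun u v v' => Subtype.ext (map_add (ιTensor u) v v'))
    (fun c u v => Subtype.ext (map_smul (ιTensor u) c v))

theorem val_rankOne (u : M) (v : N) :
    val R M N (rankOne R u v) = ExteriorAlgebra.ι R u ⊗ₜ ExteriorAlgebra.ι R v :=
  rfl

theorem rankOne_mul_rankOne_same (u u' : M) (v : N) : rankOne R u v * rankOne R u' v = 0 := by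
  have hval : Function.Injective (val R M N) := Subtype.val_injective
  apply hval
  rw [map_mul, val_rankOne, val_rankOne, Algebra.TensorProduct.tmul_mul_tmul,
    ExteriorAlgebra.ι_sq_zero, TensorProduct.tmul_zero, map_zero]

theorem val_prod_rankOne {n : ℕ} (u : Fin n → M) (v : Fin n → N) :
    val R M N (∏ i, rankOne R (u i) (v i)) =
      ExteriorAlgebra.ιMulti R n u ⊗ₜ ExteriorAlgebra.ιMulti R n v := by
  induction n with
  | zero => simp [Algebra.TensorProduct.one_def]
  | succ n ih =>
    rw [Fin.prod_univ_succ, map_mul, ih, val_rankOne, Algebra.TensorProduct.tmul_mul_tmul,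
      ExteriorAlgebra.ιMulti_succ_apply, ExteriorAlgebra.ιMulti_succ_apply]
    rfl

end DiagonalDoubleForm

end Algebra

section Determinant

variable (R : Type*) [CommRing R] (n : ℕ)

/-- The functional on `⋀Rⁿ` equal to the determinant in degree `n` and `0` in other degrees. -/
noncomputable def detForm : ExteriorAlgebra R (Fin n → R) →ₗ[R] R :=
  ExteriorAlgebra.liftAlternating (Pi.single n Matrix.detRowAlternating)

/-- The functional on diagonal double forms sending `∏ i, u i ⊗ v i` to `det u * det v`. -/
noncomputable def mixedDet : DiagonalDoubleForm R (Fin n → R) (Fin n → R) →ₗ[R] R :=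
  LinearMap.mul' R R ∘ₗ TensorProduct.map (detForm R n) (detForm R n) ∘ₗ
    (DiagonalDoubleForm.val R (Fin n → R) (Fin n → R)).toLinearMap

variable {R} {n}

open DiagonalDoubleForm

theorem mixedDet_prod_rankOne (u v : Fin n → Fin n → R) :
    mixedDet R n (∏ i, rankOne R (u i) (v i)) = (Matrix.of u).det * (Matrix.of v).det := by
  rw [mixedDet, LinearMap.comp_apply, LinearMap.comp_apply, AlgHom.toLinearMap_apply,
    val_prod_rankOne, TensorProduct.map_tmul, LinearMap.mul'_apply, detForm,
    ExteriorAlgebra.liftAlternating_apply_ιMulti, ExteriorAlgebra.liftAlternating_apply_ιMulti,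
    Pi.single_eq_same]
  rfl

/-- A matrix as a double form of degree `(1, 1)`. -/
noncomputable def matrixForm :
    Matrix (Fin n) (Fin n) R →ₗ[R] DiagonalDoubleForm R (Fin n → R) (Fin n → R) :=
  ∑ i, rankOne R (Pi.single i 1) ∘ₗ LinearMap.proj i ∘ₗ (Matrix.ofLinearEquiv R).symm.toLinearMap

theorem matrixForm_apply (K : Matrix (Fin n) (Fin n) R) :
    matrixForm K = ∑ i, rankOne R (Pi.single i 1) (K.row i) :=
  LinearMap.sum_apply _ _ _

theorem matrixForm_vecMulVec (u v : Fin n → R) :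
    matrixForm (Matrix.vecMulVec u v) = rankOne R u v := by
  conv_rhs => rw [pi_eq_sum_univ' u]
  simp only [matrixForm_apply, Matrix.row_vecMulVec, map_sum, map_smul,
    LinearMap.sum_apply, LinearMap.smul_apply]

theorem mixedDet_matrixForm_pow (K : Matrix (Fin n) (Fin n) R) :
    mixedDet R n (matrixForm K ^ n) = n.factorial • K.det := by
  have hpow := sum_pow_card_eq_factorial_smul_prod Finset.univ
    (e := fun i => rankOne R (Pi.single i (1 : R) : Fin n → R) (K.row i))
    fun _ => rankOne_mul_rankOne_same R _ _ _
  rw [Finset.card_univ, Fintype.card_fin] at hpow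
  have hone : (Matrix.of fun i => Pi.single i 1 : Matrix (Fin n) (Fin n) R) = 1 := by
    ext i j
    simp [Matrix.one_apply, Pi.single_apply, eq_comm]
  rw [matrixForm_apply, hpow, map_nsmul, mixedDet_prod_rankOne, hone, Matrix.det_one, one_mul]
  rfl

variable [IsAddTorsionFree R]

-- The form of a rank-one matrix is square-zero, so the determinant is affine in `t`.
theorem det_smul_add_smul_vecMulVec (K : Matrix (Fin (n + 1)) (Fin (n + 1)) R)
    (α β : Fin (n + 1) → R) (c t : R) :
    (c • K + t • Matrix.vecMulVec α β).det =
      c ^ (n + 1) * K.det + c ^ n * t * ((K + Matrix.vecMulVec α β).det - K.det) := by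
  have hexpand : ∀ c t : R, (n + 1).factorial • (c • K + t • Matrix.vecMulVec α β).det =
      c ^ (n + 1) * (n + 1).factorial • K.det +
        c ^ n * t * mixedDet R (n + 1) ((n + 1) * (rankOne R α β * matrixForm K ^ n)) := by
    intro c t
    rw [← mixedDet_matrixForm_pow, ← mixedDet_matrixForm_pow, map_add, map_smul,
      map_smul, matrixForm_vecMulVec,
      add_pow_succ_of_sq_eq_zero (by simp [rankOne_mul_rankOne_same]), map_add,
      smul_pow, map_smul, smul_eq_mul, smul_pow, ← smul_eq_mul (c ^ n * t), ← map_smul]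
    simp only [map_smul, smul_mul_assoc, mul_smul_comm, smul_smul]
  have hone := hexpand 1 1
  simp only [one_smul, one_pow, one_mul] at hone
  refine IsAddTorsionFree.nsmul_right_injective (Nat.factorial_ne_zero (n + 1)) ?_
  simp only [nsmul_eq_mul] at hexpand hone ⊢
  linear_combination hexpand c t - c ^ n * t * hone

theorem sum_increasingTuples_det_mul_det {u v : ℕ → ℤ → Fin (n + 1) → R}
    (hu : ∀ k x, u k x = u (k + 1) x - u (k + 1) (x + 1))
    (hv : ∀ k x, v (k + 1) x = v k x - v k (x - 1)) {a B : ℤ} (ha : a < B) :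
    ∑ Y ∈ increasingTuples n a B,
      (Matrix.of fun j : Fin (n + 1) => u j ((Fin.cons a Y : Fin (n + 1) → ℤ) j)).det *
      (Matrix.of fun j : Fin (n + 1) => v j ((Fin.cons a Y : Fin (n + 1) → ℤ) j)).det =
      (levelSum Matrix.vecMulVec u v B n (a - 1)).det -
        (levelSum Matrix.vecMulVec u v B n a).det := by
  have hlevel : ∀ p, levelSum (rankOne R · ·) u v B n p =
      matrixForm (levelSum Matrix.vecMulVec u v B n p) := by
    intro p
    simp only [levelSum, map_add, map_sum, matrixForm_vecMulVec]
  have hforms := factorial_smul_sum_increasingTuples (rankOne R)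
    (rankOne_mul_rankOne_same R) hu hv ha n
  refine IsAddTorsionFree.nsmul_right_injective (Nat.factorial_ne_zero (n + 1)) ?_
  simp only [smul_sub, ← mixedDet_matrixForm_pow, ← hlevel, ← map_sub, ← hforms]
  rw [map_nsmul, map_sum]
  congr 1
  refine Finset.sum_congr rfl fun Y _ => ?_
  rw [← mixedDet_prod_rankOne, Fin.prod_univ_succ]
  simp

end Determinant

end DoubleForms

section DetSub

theorem det_sub_mul_of_displacement {R : Type*} [CommRing R] [IsAddTorsionFree R] {n : ℕ}
    (C : Matrix (Fin (n + 1)) (Fin (n + 1)) R) (c d g h α β : Fin (n + 1) → R) (ρ : R)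
    (hC : ∀ i j, g i * h j * C i j = c i * d j * C i j + α i * β j) :
    (Matrix.of fun i j => (ρ * (c i * d j) - g i * h j) * C i j).det =
      (ρ - 1) ^ n * (ρ * ((∏ i, c i) * ∏ j, d j) - (∏ i, g i) * ∏ j, h j) * C.det := by
  have hscale : ∀ r s : Fin (n + 1) → R, (Matrix.of fun i j => r i * s j * C i j).det =
      (∏ i, r i) * (∏ j, s j) * C.det := by
    intro r s
    rw [mul_assoc, ← Matrix.det_mul_row, ← Matrix.det_mul_column]
    simp only [Matrix.of_apply, mul_assoc]
  have hsplit : (Matrix.of fun i j => (ρ * (c i * d j) - g i * h j) * C i j) =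
      (ρ - 1) • (Matrix.of fun i j => c i * d j * C i j) + (-1 : R) • Matrix.vecMulVec α β := by
    ext i j
    simp only [Matrix.of_apply, Matrix.add_apply, Matrix.smul_apply, smul_eq_mul,
      Matrix.vecMulVec_apply]
    linear_combination -hC i j
  have hadd : (Matrix.of fun i j => c i * d j * C i j) + Matrix.vecMulVec α β =
      Matrix.of fun i j => g i * h j * C i j := by
    ext i j
    simp only [Matrix.of_apply, Matrix.add_apply, Matrix.vecMulVec_apply, hC i j]
  rw [hsplit, det_smul_add_smul_vecMulVec, hadd, hscale, hscale]
  ring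

end DetSub

section Weights

variable {𝕜 : Type*} [Field 𝕜]

/-- The entry in column `k`, counted from `0`, of the matrix defining `L_X(W)`, for the position
`x` and the root `w`. Its inverse is the corresponding entry for `R_X(W)`. -/
def weight (k : ℕ) (x : ℤ) (w : 𝕜) : 𝕜 :=
  w ^ ((k : ℤ) + 1) * (w + 1) ^ (x - ((k : ℤ) + 1))

theorem LXdet_eq_det_weight {N : ℕ} (X : Fin N → ℤ) (w : Fin N → ℂ) :
    LXdet X w = (Matrix.of fun j : Fin N => fun i => weight j (X j) (w i)).det := by
  rw [LXdet, ← Matrix.det_transpose]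
  rfl

theorem RXdet_eq_det_inv_weight {N : ℕ} (X : Fin N → ℤ) (w : Fin N → ℂ) :
    RXdet X w = (Matrix.of fun j : Fin N => fun i => (weight j (X j) (w i))⁻¹).det := by
  rw [RXdet, ← Matrix.det_transpose]
  congr 1
  ext j i
  simp only [Matrix.transpose_apply, Matrix.of_apply, weight, mul_inv, ← zpow_neg, neg_sub,
    neg_add_eq_sub]

variable {w : 𝕜}

theorem weight_ne_zero (hw : w ≠ 0) (hw₁ : w + 1 ≠ 0) (k : ℕ) (x : ℤ) : weight k x w ≠ 0 :=
  mul_ne_zero (zpow_ne_zero _ hw) (zpow_ne_zero _ hw₁)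

theorem weight_add_one (hw₁ : w + 1 ≠ 0) (k : ℕ) (x : ℤ) :
    weight k (x + 1) w = weight k x w * (w + 1) := by
  rw [weight, weight, mul_assoc, ← zpow_add_one₀ hw₁]
  congr 2
  ring

theorem weight_succ_add_one (hw : w ≠ 0) (k : ℕ) (x : ℤ) :
    weight (k + 1) (x + 1) w = weight k x w * w := by
  rw [weight, weight, mul_right_comm, ← zpow_add_one₀ hw]
  push_cast
  congr 2
  ring

theorem weight_succ (hw : w ≠ 0) (hw₁ : w + 1 ≠ 0) (k : ℕ) (x : ℤ) :
    weight (k + 1) x w = weight k x w - weight k (x - 1) w := by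
  obtain ⟨x, rfl⟩ : ∃ y, x = y + 1 := ⟨x - 1, by ring⟩
  rw [weight_succ_add_one hw, weight_add_one hw₁, add_sub_cancel_right]
  ring

theorem inv_weight_eq_sub (hw : w ≠ 0) (hw₁ : w + 1 ≠ 0) (k : ℕ) (x : ℤ) :
    (weight k x w)⁻¹ = (weight (k + 1) x w)⁻¹ - (weight (k + 1) (x + 1) w)⁻¹ := by
  have hne := weight_ne_zero hw hw₁
  have hstep := weight_add_one hw₁ (k + 1) x
  rw [weight_succ_add_one hw] at hstep ⊢
  have := hne k x
  have := hne (k + 1) x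
  field_simp
  linear_combination -hstep

theorem weight_add_eq {n L : ℕ} (hL : n + 1 ≤ L) (hw₁ : w + 1 ≠ 0) {q : 𝕜}
    (hq : w ^ (n + 1) * (w + 1) ^ (L - (n + 1)) = q) (a : ℤ) :
    weight n (a + L) w = q * (w + 1) ^ a := by
  rw [← hq, ← zpow_natCast, ← zpow_natCast, mul_assoc, ← zpow_add₀ hw₁, weight]
  push_cast [hL]
  congr 2
  ring

theorem ne_zero_and_add_one_ne_zero {m k : ℕ} (hm : m ≠ 0) (hk : k ≠ 0) {q : 𝕜} (hq₀ : q ≠ 0)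
    (hq : w ^ m * (w + 1) ^ k = q) : w ≠ 0 ∧ w + 1 ≠ 0 := by
  rwa [← hq, mul_ne_zero_iff, pow_ne_zero_iff hm, pow_ne_zero_iff hk] at hq₀

variable {x y : 𝕜}

theorem sub_mul_sum_Ioo_inv_weight_mul_weight (hx₁ : x + 1 ≠ 0) (hy₁ : y + 1 ≠ 0) (k : ℕ)
    {p B : ℤ} (hp : p < B) :
    (y - x) * ∑ b ∈ Finset.Ioo p B, (weight k b x)⁻¹ * weight k b y =
      (x + 1) * ((weight k B x)⁻¹ * weight k B y -
        (weight k (p + 1) x)⁻¹ * weight k (p + 1) y) := by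
  rw [← sum_Ioo_add_one_sub (fun b => (weight k b x)⁻¹ * weight k b y) hp, Finset.mul_sum,
    Finset.mul_sum]
  refine Finset.sum_congr rfl fun b _ => ?_
  rw [weight_add_one hx₁, weight_add_one hy₁, mul_inv]
  linear_combination -(weight k b x)⁻¹ * weight k b y * (y + 1) * mul_inv_cancel₀ hx₁

theorem sub_mul_sum_range_inv_weight_mul_weight (hx : x ≠ 0) (hx₁ : x + 1 ≠ 0) (hy : y ≠ 0)
    (hy₁ : y + 1 ≠ 0) (n : ℕ) (B : ℤ) :
    (y - x) * ∑ i ∈ Finset.range n, (weight (i + 1) B x)⁻¹ * weight i (B - 1) y =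
      (x + 1) * ((weight n B x)⁻¹ * weight n B y - (weight 0 B x)⁻¹ * weight 0 B y) := by
  obtain ⟨B, rfl⟩ : ∃ b, B = b + 1 := ⟨B - 1, by ring⟩
  rw [← Finset.sum_range_sub (fun i => (weight i (B + 1) x)⁻¹ * weight i (B + 1) y),
    Finset.mul_sum, Finset.mul_sum]
  refine Finset.sum_congr rfl fun i _ => ?_
  have := weight_ne_zero hx hx₁ i B
  rw [weight_succ_add_one hx, weight_succ_add_one hy, weight_add_one hx₁, weight_add_one hy₁,
    add_sub_cancel_right]
  field_simp
  ring

end Weights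

section WeightKernel

variable {𝕜 : Type*} [Field 𝕜] {n : ℕ}

/-- The level sum of the matrices `R_b ⊗ L_b` whose differences of determinants are the sums
`H_a(W; W')`. -/
noncomputable def weightKernel (w w' : Fin (n + 1) → 𝕜) (B p : ℤ) :
    Matrix (Fin (n + 1)) (Fin (n + 1)) 𝕜 :=
  levelSum Matrix.vecMulVec (fun k b i => (weight k b (w i))⁻¹) (fun k b j => weight k b (w' j))
    B n p

theorem weightKernel_apply (w w' : Fin (n + 1) → 𝕜) (B p : ℤ) (i j : Fin (n + 1)) :
    weightKernel w w' B p i j =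
      ∑ b ∈ Finset.Ioo p B, (weight 0 b (w i))⁻¹ * weight 0 b (w' j) +
        ∑ k ∈ Finset.range n, (weight (k + 1) B (w i))⁻¹ * weight k (B - 1) (w' j) := by
  simp only [weightKernel, levelSum, Matrix.add_apply, Matrix.sum_apply, Matrix.vecMulVec_apply]

theorem tsum_RXdet_mul_LXdet {L : ℕ} (hL : 0 < L) {w w' : Fin (n + 1) → ℂ} (hw : ∀ i, w i ≠ 0)
    (hw₁ : ∀ i, w i + 1 ≠ 0) (hw' : ∀ j, w' j ≠ 0) (hw'₁ : ∀ j, w' j + 1 ≠ 0) (a : ℤ) :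
    (∑' X : {X : Fin (n + 1) → ℤ // X ∈ XNL (n + 1) L ∧ X 0 = a}, RXdet X.1 w * LXdet X.1 w') =
      (weightKernel w w' (a + L) (a - 1)).det - (weightKernel w w' (a + L) a).det := by
  rw [tsum_XNL_eq_sum hL a fun X => RXdet X w * LXdet X w']
  simp only [RXdet_eq_det_inv_weight, LXdet_eq_det_weight]
  exact sum_increasingTuples_det_mul_det (u := fun k b i => (weight k b (w i))⁻¹)
    (v := fun k b j => weight k b (w' j))
    (fun k x => funext fun i => inv_weight_eq_sub (hw i) (hw₁ i) k x)
    (fun k x => funext fun j => weight_succ (hw' j) (hw'₁ j) k x) (by omega)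

variable {L : ℕ} {q q' : 𝕜}

theorem sub_mul_weightKernel_apply {w w' : Fin (n + 1) → 𝕜} (hL : n + 1 ≤ L)
    (hq : ∀ i, w i ^ (n + 1) * (w i + 1) ^ (L - (n + 1)) = q)
    (hq' : ∀ j, w' j ^ (n + 1) * (w' j + 1) ^ (L - (n + 1)) = q')
    (hw : ∀ i, w i ≠ 0) (hw₁ : ∀ i, w i + 1 ≠ 0) (hw' : ∀ j, w' j ≠ 0) (hw'₁ : ∀ j, w' j + 1 ≠ 0)
    {a p : ℤ} (hp : p < a + L) (i j : Fin (n + 1)) :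
    (w' j - w i) * weightKernel w w' (a + L) p i j =
      q' / q * ((w i + 1) ^ (1 - a) * (w' j + 1) ^ a) -
        (w i * (w i + 1) ^ (p - 1))⁻¹ * (w' j * (w' j + 1) ^ p) := by
  have hfirst : ∀ v : 𝕜, weight 0 (p + 1) v = v * (v + 1) ^ p := by
    intro v
    simp [weight]
  rw [weightKernel_apply, mul_add,
    sub_mul_sum_Ioo_inv_weight_mul_weight (hw₁ i) (hw'₁ j) 0 hp,
    sub_mul_sum_range_inv_weight_mul_weight (hw i) (hw₁ i) (hw' j) (hw'₁ j), hfirst, hfirst,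
    weight_add_eq hL (hw₁ i) (hq i), weight_add_eq hL (hw'₁ j) (hq' j), zpow_sub₀ (hw₁ i),
    zpow_sub₀ (hw₁ i), zpow_one, mul_inv, mul_inv, mul_inv, inv_div]
  ring

theorem inv_mul_zpow_eq_add_mul_sub {x y : 𝕜} (hx : x ≠ 0) (hx₁ : x + 1 ≠ 0) (hy₁ : y + 1 ≠ 0)
    {a p : ℤ} (hp : p = a ∨ p = a - 1) :
    (x * (x + 1) ^ (p - 1))⁻¹ * (y * (y + 1) ^ p) =
      (x + 1) ^ (1 - a) * (y + 1) ^ a + (x * (x + 1) ^ (a - 1))⁻¹ * (y + 1) ^ p * (y - x) := by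
  rcases hp with rfl | rfl <;>
  · simp only [zpow_sub₀ hx₁, zpow_sub₀ hy₁, zpow_one]
    field_simp
    ring

theorem det_weightKernel [IsAddTorsionFree 𝕜] {w w' : Fin (n + 1) → 𝕜} (hL : n + 1 ≤ L)
    (hq : ∀ i, w i ^ (n + 1) * (w i + 1) ^ (L - (n + 1)) = q)
    (hq' : ∀ j, w' j ^ (n + 1) * (w' j + 1) ^ (L - (n + 1)) = q')
    (hw : ∀ i, w i ≠ 0) (hw₁ : ∀ i, w i + 1 ≠ 0) (hw' : ∀ j, w' j ≠ 0) (hw'₁ : ∀ j, w' j + 1 ≠ 0)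
    (hne : ∀ i j, w' j - w i ≠ 0) {a p : ℤ} (hp : p = a ∨ p = a - 1) :
    (weightKernel w w' (a + L) p).det =
      (q' / q - 1) ^ n *
        (q' / q * ((∏ i, (w i + 1) ^ (1 - a)) * ∏ j, (w' j + 1) ^ a) -
          ∏ j, w' j * (w' j + 1) ^ p / (w j * (w j + 1) ^ (p - 1))) *
        (Matrix.of fun i j => 1 / (w' j - w i)).det := by
  have hentries : weightKernel w w' (a + L) p = Matrix.of fun i j =>
      (q' / q * ((w i + 1) ^ (1 - a) * (w' j + 1) ^ a) -
        (w i * (w i + 1) ^ (p - 1))⁻¹ * (w' j * (w' j + 1) ^ p)) * (1 / (w' j - w i)) := by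
    ext i j
    rw [Matrix.of_apply, mul_one_div, eq_div_iff (hne i j), mul_comm,
      sub_mul_weightKernel_apply hL hq hq' hw hw₁ hw' hw'₁ (by omega)]
  have hdisplacement : ∀ i j, (w i * (w i + 1) ^ (p - 1))⁻¹ * (w' j * (w' j + 1) ^ p) *
      (1 / (w' j - w i)) = (w i + 1) ^ (1 - a) * (w' j + 1) ^ a * (1 / (w' j - w i)) +
        (w i * (w i + 1) ^ (a - 1))⁻¹ * (w' j + 1) ^ p := by
    intro i j
    rw [inv_mul_zpow_eq_add_mul_sub (hw i) (hw₁ i) (hw'₁ j) hp, add_mul, mul_assoc _ (_ - _),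
      mul_one_div_cancel (hne i j), mul_one]
  rw [hentries]
  refine (det_sub_mul_of_displacement (Matrix.of fun i j => 1 / (w' j - w i)) _ _ _ _ _ _ _
    hdisplacement).trans ?_
  rw [Finset.prod_inv_distrib, Finset.prod_div_distrib, inv_mul_eq_div]

end WeightKernel

/-- `H_a(W;W') = ∑_{X ∈ 𝒳_N(L), x_1 = a} R_X(W) L_X(W')` evaluated in closed form;
the sum is over the finite set of `X ∈ 𝒳_N(L)` with first entry equal to `a`. -/
theorem Ha_eq
    (N L : ℕ) (hN : 1 ≤ N) (hNL : N < L)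
    (z z' : ℂ) (hz : z ≠ 0) (hz' : z' ≠ 0) (hzz : z ^ L ≠ z' ^ L)
    (w w' : Fin N → ℂ)
    (hw : ∀ j, w j ^ N * (w j + 1) ^ (L - N) = z ^ L)
    (hw' : ∀ j, w' j ^ N * (w' j + 1) ^ (L - N) = z' ^ L)
    (a : ℤ) :
    (∑' X : {X : Fin N → ℤ // X ∈ XNL N L ∧ X (⟨0, hN⟩ : Fin N) = a},
        RXdet X.1 w * LXdet X.1 w') =
      -(((z' / z) ^ L - 1) ^ (N - 1)) *
        ((∏ j, (w' j * (w' j + 1) ^ (a - 1)) / (w j * (w j + 1) ^ (a - 2))) -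
          ∏ j, (w' j * (w' j + 1) ^ a) / (w j * (w j + 1) ^ (a - 1))) *
        Matrix.det (Matrix.of fun i i' : Fin N => 1 / (w' i' - w i)) := by
  obtain ⟨n, rfl⟩ := Nat.exists_eq_add_of_le' hN
  have hL : L - (n + 1) ≠ 0 := Nat.sub_ne_zero_of_lt hNL
  choose hw₀ hw₁ using fun i =>
    ne_zero_and_add_one_ne_zero n.succ_ne_zero hL (pow_ne_zero L hz) (hw i)
  choose hw'₀ hw'₁ using fun j =>
    ne_zero_and_add_one_ne_zero n.succ_ne_zero hL (pow_ne_zero L hz') (hw' j)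
  have hne : ∀ i j, w' j - w i ≠ 0 := fun i j h =>
    hzz (by rw [← hw i, ← hw' j, sub_eq_zero.1 h])
  have hdet := fun p => det_weightKernel (a := a) (p := p) hNL.le hw hw' hw₀ hw₁ hw'₀ hw'₁ hne
  refine (tsum_RXdet_mul_LXdet (by omega) hw₀ hw₁ hw'₀ hw'₁ a).trans ?_
  rw [hdet (a - 1) (Or.inr rfl), hdet a (Or.inl rfl), ← div_pow, sub_sub, one_add_one_eq_two,
    Nat.add_sub_cancel]
  ring
end

section
/- Let n ≥ 1 and let w_1,…,w_n, w′_1,…,w′_n be complex numbers with w_i ≠ 0 and w′_i ≠ 0 for all i and w_i ≠ w′_j for all i,j. Then ∑_{k=1}^{n} ∑_{(J_1,…,J_k),(J′_1,…,J′_k)} (−1)^{k + #(J_1,…,J_k) + #(J′_1,…,J′_k)} ∏_{j=1}^{k} [ ( ∏_{i′∈J′_j} w′_{i′} / ∏_{i∈J_j} w_i )^{|J_1|+⋯+|J_{j−1}|+1} · det[ 1/(w_i − w′_{i′}) ]_{i∈J_j, i′∈J′_j} ] = ( ∏_{j=1}^n (w′_j / w_j)^{n} ) · det[ 1/(w′_{i′}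 − w_i) ]_{i,i′=1}^{n}, where the inner sum is over all pairs of ordered partitions (J_1,…,J_k) and (J′_1,…,J′_k) of {1,…,n} into nonempty subsets satisfying |J_i| = |J′_i| for every i. -/
open scoped BigOperators Classical

/-- `#(J_1,…,J_k)`: the number of pairs `(p,q)` with `p ∈ J_i`, `q ∈ J_j`,
`p < q` and `i > j`. -/
def hashTuple {n k : ℕ} (J : Fin k → Finset (Fin n)) : ℕ :=
  ∑ i : Fin k, ∑ j : Fin k,
    if j < i then (((J i) ×ˢ (J j)).filter fun pq => pq.1 < pq.2).card else 0

/-- `det[1/(w_i − w'_{i'})]_{i ∈ S, i' ∈ T}`: rows indexed by the elements of `S`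
in increasing order and columns by the elements of `T` in increasing order
(requires `S.card = T.card`; junk value `0` otherwise). -/
noncomputable def cauchySubDet {n : ℕ} (w w' : Fin n → ℂ) (S T : Finset (Fin n)) : ℂ :=
  if h : S.card = T.card then
    Matrix.det (Matrix.of fun a b : Fin S.card =>
      1 / (w (S.orderEmbOfFin rfl a) - w' (T.orderEmbOfFin h.symm b)))
  else 0

/-!
Deleting the last pair of blocks from a pair of ordered partitions turns the left-hand side into a
recursion over pairs of subsets, so it suffices that the right-hand side satisfies it too. With
`x = ∏ w'_j / ∏ w_i`, the recursion says that the convolution of the minors of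
`(w'_j / w_i) / (w_i - w'_j)` with those of `x / (w'_j - w_i)` vanishes. By the Laplace expansion of
the determinant of a sum, this convolution is the determinant of
`w_i⁻¹ (w'_j - x w_i) / (w_i - w'_j)`. For the Cauchy matrix `C` put `A = diag(w) C`; then
`A - C diag(w')` is the all-ones matrix, and `C diag(w') - x A = (1 - x) A - 𝟙 𝟙ᵀ` is singular by
the matrix determinant lemma, as `det (A - 𝟙 𝟙ᵀ) = det (C diag(w')) = x det A`.
-/

section
open Finset Matrix
variable {α ι κ R K : Type*}

section RankOne
variable [Fintype ι] [DecidableEq ι] [CommRing R]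

theorem det_of_add_ite_mem_mul (A : Matrix ι ι R) (u v : ι → R) (s : Finset ι) :
    (of fun i j => A i j + if i ∈ s then u i * v j else 0).det =
      A.det + ∑ i ∈ s, u i * (A.updateRow i v).det := by
  induction s using Finset.induction_on with
  | empty =>
    simp only [notMem_empty, if_false, add_zero, sum_empty]
    rfl
  | insert k s hk ih =>
    set B : Matrix ι ι R := of fun i j => A i j + if i ∈ s then u i * v j else 0 with hB
    have hBk : B k = A k := by ext j; simp [hB, hk]
    have hinsert : (of fun i j => A i j + if i ∈ insert k s then u i * v j else 0) =
        B.updateRow k (B k + u k • v) := by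
      ext i j
      by_cases hi : i = k
      · subst hi; simp [hBk]
      · simp [hi, hB]
    have hreplace : (B.updateRow k v).det = (A.updateRow k v).det := by
      refine det_eq_of_forall_row_eq_smul_add_const (fun i => if i ∈ s then u i else 0) k
        (by simp [hk]) fun i j => ?_
      by_cases hi : i = k
      · subst hi; simp [hk]
      · simp [hi, hB]
    rw [hinsert, det_updateRow_add, det_updateRow_smul, updateRow_eq_self, hreplace, ih,
      sum_insert hk]
    ring

theorem det_add_vecMulVec (A : Matrix ι ι R) (u v : ι → R) :
    (A + vecMulVec u v).det = A.det + v ⬝ᵥ A.adjugate *ᵥ u := by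
  have hrow (i : ι) : (A.updateRow i v).det = (v ᵥ* A.adjugate) i := by
    rw [← cramer_transpose_apply, cramer_eq_adjugate_mulVec, ← adjugate_transpose,
      mulVec_transpose]
  have huniv : A + vecMulVec u v =
      of fun i j => A i j + if i ∈ (univ : Finset ι) then u i * v j else 0 := by
    ext i j; simp [vecMulVec_apply]
  rw [huniv, det_of_add_ite_mem_mul, dotProduct_mulVec, dotProduct_comm]
  simp only [hrow, dotProduct]

theorem det_one_sub_smul_sub_vecMulVec_eq_zero [Nonempty ι] {A : Matrix ι ι R} {u v : ι → R}
    {x : R} (h : (A - vecMulVec u v).det = x * A.det) :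
    ((1 - x) • A - vecMulVec u v).det = 0 := by
  have hdet (t : R) : (t • A - vecMulVec u v).det =
      t ^ (Fintype.card ι - 1) * (t * A.det - v ⬝ᵥ A.adjugate *ᵥ u) := by
    rw [sub_eq_add_neg, ← neg_vecMulVec, det_add_vecMulVec, det_smul, adjugate_smul,
      ← mul_pow_sub_one Fintype.card_ne_zero, mulVec_neg, dotProduct_neg, smul_mulVec,
      dotProduct_smul, smul_eq_mul]
    ring
  have hone := hdet 1
  rw [one_smul, h, one_pow, one_mul, one_mul] at hone
  rw [hdet, show (1 - x) * A.det - v ⬝ᵥ A.adjugate *ᵥ u = 0 by linear_combination -hone,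
    mul_zero]

theorem det_sub_mul_mul_eq_zero [Nonempty ι] {u v : ι → R} {C : Matrix ι ι R} {x : R}
    (hC : ∀ i j, (u i - v j) * C i j = 1) (hx : x * ∏ i, u i = ∏ i, v i) :
    (of fun i j => (v j - x * u i) * C i j).det = 0 := by
  set D : Matrix ι ι R := of fun i j => u i * C i j with hD
  have hcols : D - vecMulVec 1 1 = of fun i j => v j * C i j := by
    ext i j
    simp only [hD, Matrix.sub_apply, of_apply, vecMulVec_apply, Pi.one_apply]
    linear_combination hC i j
  have hrows : (of fun i j => (v j - x * u i) * C i j) = (1 - x) • D - vecMulVec 1 1 := by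
    ext i j
    simp only [hD, Matrix.sub_apply, Matrix.smul_apply, of_apply, vecMulVec_apply, Pi.one_apply,
      smul_eq_mul]
    linear_combination -hC i j
  rw [hrows, det_one_sub_smul_sub_vecMulVec_eq_zero]
  rw [hcols, det_mul_row, hD, det_mul_column, ← hx, mul_assoc]

end RankOne

section Minor

@[to_additive]
theorem prod_orderEmbOfFin [LinearOrder α] {M : Type*} [CommMonoid M] {S : Finset α} {m : ℕ}
    (hS : #S = m) (f : α → M) : ∏ a, f (S.orderEmbOfFin hS a) = ∏ i ∈ S, f i := by
  conv_rhs => rw [← S.map_orderEmbOfFin_univ hS, prod_map]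
  rfl

theorem card_filter_lt_orderEmbOfFin [LinearOrder α] {S : Finset α} {m : ℕ} (hS : #S = m)
    (j : Fin m) : #{a ∈ S | a < S.orderEmbOfFin hS j} = j := by
  have hIio : ({i | i < j} : Finset (Fin m)) = Iio j := by ext i; simp
  rw [card_filter, ← sum_orderEmbOfFin hS]
  simp [hIio]

theorem orderEmbOfFin_erase [LinearOrder α] {S : Finset α} {m : ℕ} (hS : #S = m + 1)
    (j : Fin (m + 1)) (h : #(S.erase (S.orderEmbOfFin hS j)) = m) (a : Fin m) :
    (S.erase (S.orderEmbOfFin hS j)).orderEmbOfFin h a = S.orderEmbOfFin hS (j.succAbove a) := by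
  refine (congrFun (orderEmbOfFin_unique h (f := fun a => S.orderEmbOfFin hS (j.succAbove a))
    (fun a => ?_) ?_) a).symm
  · simp [Fin.succAbove_ne]
  · exact (S.orderEmbOfFin hS).strictMono.comp (Fin.strictMono_succAbove j)

theorem orderEmbOfFin_insert_min [LinearOrder α] {s : α} {S : Finset α} (hs : ∀ x ∈ S, s < x)
    (h : #(insert s S) = #S + 1) :
    ⇑((insert s S).orderEmbOfFin h) = Fin.cons s (S.orderEmbOfFin rfl) := by
  refine (orderEmbOfFin_unique h (fun a => ?_) ?_).symm
  · cases a using Fin.cases <;> simp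
  · exact Fin.strictMono_cons.2
      ⟨fun a => hs _ (orderEmbOfFin_mem _ _ _), OrderEmbedding.strictMono _⟩

variable [LinearOrder ι] [LinearOrder κ] [CommRing R]

/-- The minor of `M` on the rows `S` and columns `T`, each listed in increasing order; it is `0`
when `S` and `T` have different sizes. -/
def minor (M : Matrix ι κ R) (S : Finset ι) (T : Finset κ) : R :=
  if h : #S = #T then (M.submatrix (S.orderEmbOfFin rfl) (T.orderEmbOfFin h.symm)).det else 0

theorem minor_eq_det (M : Matrix ι κ R) {S : Finset ι} {T : Finset κ} {m : ℕ} (hS : #S = m)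
    (hT : #T = m) :
    minor M S T = (M.submatrix (S.orderEmbOfFin hS) (T.orderEmbOfFin hT)).det := by
  subst hS
  exact dif_pos hT.symm

theorem minor_of_card_ne (M : Matrix ι κ R) {S : Finset ι} {T : Finset κ} (h : #S ≠ #T) :
    minor M S T = 0 :=
  dif_neg h

theorem minor_empty_empty (M : Matrix ι κ R) : minor M ∅ ∅ = 1 := by
  rw [minor_eq_det M (card_empty (α := ι)) (card_empty (α := κ)), det_isEmpty]

theorem minor_empty_left (M : Matrix ι κ R) (T : Finset κ) :
    minor M ∅ T = if T = ∅ then 1 else 0 := by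
  split_ifs with hT
  · rw [hT, minor_empty_empty]
  · exact minor_of_card_ne M (by simpa [eq_comm] using hT)

theorem minor_of_mul_mul (f : ι → R) (g : κ → R) (M : Matrix ι κ R) (S : Finset ι)
    (T : Finset κ) :
    minor (of fun i j => f i * (g j * M i j)) S T =
      (∏ i ∈ S, f i) * ((∏ j ∈ T, g j) * minor M S T) := by
  by_cases h : #S = #T
  · rw [minor_eq_det _ rfl h.symm, minor_eq_det _ rfl h.symm, ← prod_orderEmbOfFin rfl f,
      ← prod_orderEmbOfFin h.symm g, ← det_mul_row, ← det_mul_column]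
    rfl
  · simp [minor_of_card_ne _ h]

theorem minor_smul (c : R) (M : Matrix ι κ R) (S : Finset ι) (T : Finset κ) :
    minor (c • M) S T = c ^ #S * minor M S T := by
  have hscale := minor_of_mul_mul (fun _ => c) (fun _ => 1) M S T
  simp only [prod_const, one_pow, one_mul] at hscale
  exact hscale

theorem minor_univ {n : ℕ} (M : Matrix (Fin n) (Fin n) R) : minor M univ univ = M.det := by
  have hid : (univ : Finset (Fin n)).orderEmbOfFin (card_fin n) = RelEmbedding.refl _ :=
    (orderEmbOfFin_unique' _ fun _ => mem_univ _).symm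
  rw [minor_eq_det M (card_fin n) (card_fin n), hid]
  rfl

theorem minor_insert_min (M : Matrix ι κ R) {s : ι} {S : Finset ι} (hs : ∀ x ∈ S, s < x)
    (T : Finset κ) :
    minor M (insert s S) T =
      ∑ b ∈ T, (-1) ^ #{x ∈ T | x < b} * M s b * minor M S (T.erase b) := by
  have hS : #(insert s S) = #S + 1 := card_insert_of_notMem fun h => (hs s h).false
  by_cases hT : #T = #S + 1
  · rw [minor_eq_det M hS hT, det_succ_row_zero, ← sum_orderEmbOfFin hT]
    refine sum_congr rfl fun j _ => ?_
    have hTj : #(T.erase (T.orderEmbOfFin hT j)) = #S := by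
      rw [card_erase_of_mem (orderEmbOfFin_mem _ _ _), hT, Nat.add_sub_cancel]
    rw [card_filter_lt_orderEmbOfFin, minor_eq_det M rfl hTj, submatrix_apply, submatrix_submatrix,
      orderEmbOfFin_insert_min hs hS, Fin.cons_zero]
    congr 2
    ext a b
    simp [orderEmbOfFin_erase]
  · rw [minor_of_card_ne _ (by omega)]
    refine (sum_eq_zero fun b hb => ?_).symm
    have := card_erase_add_one hb
    rw [minor_of_card_ne _ (by omega), mul_zero]

end Minor

section Laplace

section
variable [LinearOrder α]

/-- The number of pairs `(p, q) ∈ A × B` with `p < q`; its parity is the sign of a shuffle in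
Laplace expansions. -/
def ascentCount (A B : Finset α) : ℕ := #{pq ∈ A ×ˢ B | pq.1 < pq.2}

theorem ascentCount_empty_left (B : Finset α) : ascentCount ∅ B = 0 := by
  simp [ascentCount]

theorem ascentCount_insert_left {s : α} {A : Finset α} (hs : s ∉ A) (B : Finset α) :
    ascentCount (insert s A) B = #{q ∈ B | s < q} + ascentCount A B := by
  simp only [ascentCount, card_filter, sum_product, sum_insert hs]

theorem ascentCount_insert_right (A : Finset α) {s : α} {B : Finset α} (hs : s ∉ B) :
    ascentCount A (insert s B) = #{p ∈ A | p < s} + ascentCount A B := by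
  simp only [ascentCount, card_filter, sum_product_right, sum_insert hs]

theorem card_filter_lt_add_card_filter_gt {s : α} {A : Finset α} (hs : s ∉ A) :
    #{a ∈ A | a < s} + #{a ∈ A | s < a} = #A := by
  have hgt : {a ∈ A | s < a} = {a ∈ A | ¬a < s} :=
    filter_congr fun a ha => by
      rw [not_lt, le_iff_lt_or_eq, or_iff_left (ne_of_mem_of_not_mem ha hs).symm]
  rw [hgt, card_filter_add_card_filter_not]

theorem card_filter_lt_of_subset_erase {T B : Finset α} {b : α} (hB : B ⊆ T.erase b) :
    #{x ∈ T | x < b} = #{x ∈ B | x < b} + #{x ∈ T.erase b \ B | x < b} := by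
  rw [← card_union_of_disjoint (disjoint_filter_filter disjoint_sdiff), ← filter_union,
    union_sdiff_of_subset hB, filter_erase, erase_eq_of_notMem (by simp)]

end

section
variable [DecidableEq α] {M : Type*} [AddCommMonoid M]

theorem sum_powerset_sum_mem (T : Finset α) (g : Finset α → α → M) :
    ∑ B ∈ T.powerset, ∑ b ∈ B, g B b =
      ∑ b ∈ T, ∑ B ∈ (T.erase b).powerset, g (insert b B) b := by
  have hcomm : ∑ B ∈ T.powerset, ∑ b ∈ B, g B b =
      ∑ b ∈ T, ∑ B ∈ T.powerset with b ∈ B, g B b :=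
    sum_comm' fun B b => by simp only [mem_filter, mem_powerset]; tauto
  rw [hcomm]
  refine sum_congr rfl fun b hb => ?_
  refine sum_nbij' (fun B => B.erase b) (fun B => insert b B) ?_ ?_ ?_ ?_ ?_
  all_goals intro B hB
  all_goals simp only [mem_filter, mem_powerset, subset_erase] at hB ⊢
  · exact ⟨(erase_subset b B).trans hB.1, notMem_erase b B⟩
  · exact ⟨insert_subset hb hB.1, mem_insert_self b B⟩
  · exact insert_erase hB.2
  · exact erase_insert hB.2
  · rw [insert_erase hB.2]

theorem sum_powerset_sum_sdiff (T : Finset α) (g : Finset α → α → M) :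
    ∑ B ∈ T.powerset, ∑ b ∈ T \ B, g B b =
      ∑ b ∈ T, ∑ B ∈ (T.erase b).powerset, g B b := by
  refine sum_comm' fun B b => ?_
  simp only [mem_powerset, mem_sdiff, subset_erase]
  tauto

end

variable [LinearOrder ι] [LinearOrder κ] [CommRing R]

/-- The Laplace expansion of the minor on the columns `T` whose rows are the rows `C` of `N`
followed by the rows `A` of `M`, grouped by the columns `B` used by `M`. -/
def laplaceSum (M N : Matrix ι κ R) (A C : Finset ι) (T : Finset κ) : R :=
  ∑ B ∈ T.powerset, (-1) ^ ascentCount B (T \ B) * (minor M A B * minor N C (T \ B))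

theorem laplaceSum_empty_left (M N : Matrix ι κ R) (C : Finset ι) (T : Finset κ) :
    laplaceSum M N ∅ C T = minor N C T := by
  rw [laplaceSum, sum_eq_single_of_mem ∅ (empty_mem_powerset T)]
  · simp [ascentCount_empty_left, minor_empty_empty]
  · intro B _ hB
    simp [minor_empty_left, hB]

theorem laplaceSum_insert_right (M N : Matrix ι κ R) (A : Finset ι) {s : ι} {C : Finset ι}
    (hs : ∀ x ∈ C, s < x) (T : Finset κ) :
    laplaceSum M N A (insert s C) T =
      ∑ b ∈ T, (-1) ^ #{x ∈ T | x < b} * N s b * laplaceSum M N A C (T.erase b) := by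
  simp only [laplaceSum, minor_insert_min N hs, mul_sum]
  rw [sum_powerset_sum_sdiff]
  refine sum_congr rfl fun b hb => sum_congr rfl fun B hB => ?_
  rw [mem_powerset] at hB
  have hbB : b ∉ B := fun h => notMem_erase b T (hB h)
  have hTB : T \ B = insert b (T.erase b \ B) := by
    rw [← insert_sdiff_of_notMem _ hbB, insert_erase hb]
  have hb' : b ∉ T.erase b \ B := fun h => notMem_erase b T (sdiff_subset h)
  rw [hTB, erase_insert hb', filter_insert, if_neg (lt_irrefl b), ascentCount_insert_right _ hb',
    card_filter_lt_of_subset_erase hB]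
  ring

theorem laplaceSum_insert_left (M N : Matrix ι κ R) {s : ι} {A : Finset ι} (C : Finset ι)
    (hs : ∀ x ∈ A, s < x) (T : Finset κ) :
    laplaceSum M N (insert s A) C T =
      (-1) ^ #C * ∑ b ∈ T, (-1) ^ #{x ∈ T | x < b} * M s b * laplaceSum M N A C (T.erase b) := by
  simp only [laplaceSum, minor_insert_min M hs, mul_sum, sum_mul]
  rw [sum_powerset_sum_mem]
  refine sum_congr rfl fun b _ => sum_congr rfl fun B hB => ?_
  rw [mem_powerset] at hB
  have hbB : b ∉ B := fun h => notMem_erase b T (hB h)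
  have hTB : T \ insert b B = T.erase b \ B := by rw [sdiff_insert, erase_sdiff_comm]
  rw [hTB, erase_insert hbB, filter_insert, if_neg (lt_irrefl b)]
  by_cases hC : #C = #(T.erase b \ B)
  · have hparity : (-1 : R) ^ #{x ∈ T.erase b \ B | b < x} =
        (-1) ^ #C * (-1) ^ #{x ∈ T.erase b \ B | x < b} := by
      rw [hC, ← card_filter_lt_add_card_filter_gt fun h => notMem_erase b T (sdiff_subset h),
        pow_add, mul_right_comm, ← mul_pow]
      simp
    rw [ascentCount_insert_left hbB, card_filter_lt_of_subset_erase hB, pow_add, pow_add, hparity]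
    ring
  · simp [minor_of_card_ne N hC]

theorem minor_add (M N : Matrix ι κ R) (S : Finset ι) (T : Finset κ) :
    minor (M + N) S T =
      ∑ A ∈ S.powerset, (-1) ^ ascentCount A (S \ A) * laplaceSum M N A (S \ A) T := by
  induction S using Finset.induction_on_min generalizing T with
  | empty => simp [ascentCount_empty_left, laplaceSum_empty_left, minor_empty_left]
  | insert s S hs ih =>
    have hsS : s ∉ S := fun h => (hs s h).false
    rw [sum_powerset_insert hsS, minor_insert_min _ hs, ← sum_add_distrib]
    simp only [ih, mul_sum]
    rw [sum_comm]
    refine sum_congr rfl fun A hA => ?_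
    rw [mem_powerset] at hA
    have hC : ∀ x ∈ S \ A, s < x := fun x hx => hs x (sdiff_subset hx)
    have hA' : ∀ x ∈ A, s < x := fun x hx => hs x (hA hx)
    have hsA : s ∉ A := fun h => hsS (hA h)
    have hAs : #{p ∈ A | p < s} = 0 :=
      card_eq_zero.2 (filter_eq_empty_iff.2 fun x hx => (hA' x hx).not_gt)
    have hsC : #{q ∈ S \ A | s < q} = #(S \ A) := by rw [filter_true_of_mem hC]
    have hsq : ((-1 : R) ^ #(S \ A)) ^ 2 = 1 := by rw [← pow_mul, mul_comm, pow_mul]; simp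
    rw [insert_sdiff_of_notMem _ hsA, insert_sdiff_insert, sdiff_insert_of_notMem hsS,
      ascentCount_insert_right _ fun h => hsS (sdiff_subset h), ascentCount_insert_left hsA,
      laplaceSum_insert_right M N A hC, laplaceSum_insert_left M N _ hA', hAs, hsC,
      zero_add, pow_add]
    simp only [mul_sum, ← sum_add_distrib]
    refine sum_congr rfl fun b _ => ?_
    rw [Matrix.add_apply]
    linear_combination (-(-1) ^ #{x ∈ T | x < b} * M s b * (-1) ^ ascentCount A (S \ A) *
      laplaceSum M N A (S \ A) (T.erase b)) * hsq

end Laplace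

section OrderedPartitions

section
variable [DecidableEq α] {k : ℕ}

/-- The ordered partitions `(J_1, …, J_k)` of `S` into nonempty blocks. -/
def orderedPartitions (k : ℕ) (S : Finset α) : Finset (Fin k → Finset α) :=
  {J ∈ Fintype.piFinset fun _ => S.powerset |
    (∀ i, (J i).Nonempty) ∧ (∀ i j, i ≠ j → Disjoint (J i) (J j)) ∧ univ.biUnion J = S}

theorem mem_orderedPartitions {S : Finset α} {J : Fin k → Finset α} :
    J ∈ orderedPartitions k S ↔
      (∀ i, (J i).Nonempty) ∧ (∀ i j, i ≠ j → Disjoint (J i) (J j)) ∧ univ.biUnion J = S := by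
  simp only [orderedPartitions, mem_filter, Fintype.mem_piFinset, mem_powerset,
    and_iff_right_iff_imp]
  rintro ⟨-, -, rfl⟩ i
  exact subset_biUnion_of_mem J (mem_univ i)

theorem orderedPartitions_zero_empty : orderedPartitions 0 (∅ : Finset α) = univ := by
  refine eq_univ_of_forall fun J => mem_orderedPartitions.2 ⟨nofun, nofun, ?_⟩
  rw [univ_eq_empty, biUnion_empty]

theorem orderedPartitions_zero_of_nonempty {S : Finset α} (hS : S.Nonempty) :
    orderedPartitions 0 S = ∅ := by
  ext J
  simp [mem_orderedPartitions, hS.ne_empty.symm]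

theorem snoc_mem_orderedPartitions {S A : Finset α} {J : Fin k → Finset α} :
    (Fin.snoc J A : Fin (k + 1) → Finset α) ∈ orderedPartitions (k + 1) S ↔
      (A.Nonempty ∧ A ⊆ S) ∧ J ∈ orderedPartitions k (S \ A) := by
  have hunion : univ.biUnion (Fin.snoc J A : Fin (k + 1) → Finset α) = A ∪ univ.biUnion J := by
    ext x
    simp [Fin.exists_fin_succ', or_comm]
  simp only [mem_orderedPartitions, hunion, Fin.forall_fin_succ', Fin.snoc_castSucc,
    Fin.snoc_last]
  constructor
  · rintro ⟨⟨hJ, hA⟩, ⟨hdisj, hlast⟩, rfl⟩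
    refine ⟨⟨hA, subset_union_left⟩, hJ,
      fun i j hij => (hdisj i).1 j (by simpa using hij), (union_sdiff_cancel_left ?_).symm⟩
    exact (disjoint_biUnion_right _ _ _).2 fun i _ => hlast.1 i (Fin.castSucc_lt_last i).ne'
  · rintro ⟨⟨hA, hAS⟩, hJ, hdisj, hS⟩
    have hAJ (i : Fin k) : Disjoint A (J i) :=
      (disjoint_biUnion_right _ _ _).1 (hS ▸ disjoint_sdiff) i (mem_univ i)
    refine ⟨⟨hJ, hA⟩, ⟨fun i => ⟨fun j hij => hdisj i j (by simpa using hij),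
      fun _ => (hAJ i).symm⟩, fun i _ => hAJ i, fun h => (h rfl).elim⟩, ?_⟩
    rw [hS, union_sdiff_of_subset hAS]

theorem sum_orderedPartitions_succ {M : Type*} [AddCommMonoid M] (S : Finset α)
    (f : (Fin (k + 1) → Finset α) → M) :
    ∑ J ∈ orderedPartitions (k + 1) S, f J =
      ∑ A ∈ S.powerset.erase ∅, ∑ J ∈ orderedPartitions k (S \ A), f (Fin.snoc J A) := by
  rw [sum_sigma']
  refine sum_bij' (fun J _ => ⟨J (Fin.last k), Fin.init J⟩) (fun x _ => Fin.snoc x.2 x.1)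
    (fun J hJ => ?_) (fun x hx => ?_) (fun J _ => ?_) (fun x _ => ?_) (fun J _ => ?_)
  · rw [← Fin.snoc_init_self J, snoc_mem_orderedPartitions] at hJ
    simpa [nonempty_iff_ne_empty] using hJ
  · rw [snoc_mem_orderedPartitions]
    simpa [nonempty_iff_ne_empty] using hx
  · exact Fin.snoc_init_self J
  · simp
  · rw [Fin.snoc_init_self]

theorem sum_card_of_mem_orderedPartitions {S : Finset α} {J : Fin k → Finset α}
    (hJ : J ∈ orderedPartitions k S) : ∑ i, #(J i) = #S := by
  obtain ⟨-, hdisj, rfl⟩ := mem_orderedPartitions.1 hJ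
  exact (card_biUnion fun i _ j _ => hdisj i j).symm

end

section
variable [LinearOrder α] {k : ℕ}

/-- The paper's `#(J_1, …, J_k)` over an arbitrary linear order. -/
def inversionCount (J : Fin k → Finset α) : ℕ :=
  ∑ i, ∑ j, if j < i then ascentCount (J i) (J j) else 0

theorem inversionCount_snoc {S : Finset α} {J : Fin k → Finset α}
    (hJ : J ∈ orderedPartitions k S) (A : Finset α) :
    inversionCount (Fin.snoc J A : Fin (k + 1) → Finset α) =
      inversionCount J + ascentCount A S := by
  obtain ⟨-, hdisj, rfl⟩ := mem_orderedPartitions.1 hJ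
  have hsum : ascentCount A (univ.biUnion J) = ∑ j, ascentCount A (J j) := by
    simp only [ascentCount, card_filter, sum_product_right]
    rw [sum_biUnion fun i _ j _ => hdisj i j]
  rw [hsum]
  simp [inversionCount, Fin.sum_univ_castSucc, Fin.castSucc_lt_last, (Fin.le_last _).not_gt]

end

end OrderedPartitions

section PartitionSum
variable [Field K]

/-- The Cauchy matrix `1 / (w_i - w'_j)`, over arbitrary index types. -/
def cauchyMatrix (w : ι → K) (w' : κ → K) : Matrix ι κ K := of fun i j => 1 / (w i - w' j)

theorem transpose_cauchyMatrix (w : ι → K) (w' : κ → K) :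
    (cauchyMatrix w' w)ᵀ = -cauchyMatrix w w' := by
  ext i j
  simp only [cauchyMatrix, transpose_apply, of_apply, Matrix.neg_apply]
  rw [← neg_sub, one_div_neg_eq_neg_one_div]

/-- The quotient of `∏_{j ∈ T} w'_j` by `∏_{i ∈ S} w_i`. -/
def prodRatio (w : ι → K) (w' : κ → K) (S : Finset ι) (T : Finset κ) : K :=
  (∏ j ∈ T, w' j) / ∏ i ∈ S, w i

variable [LinearOrder ι] [LinearOrder κ] {k : ℕ}

theorem prodRatio_mul_prodRatio_sdiff (w : ι → K) (w' : κ → K) {A S : Finset ι} {B T : Finset κ}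
    (hA : A ⊆ S) (hB : B ⊆ T) :
    prodRatio w w' A B * prodRatio w w' (S \ A) (T \ B) = prodRatio w w' S T := by
  rw [prodRatio, prodRatio, prodRatio, div_mul_div_comm, mul_comm (∏ j ∈ B, w' j),
    mul_comm (∏ i ∈ A, w i), prod_sdiff hA, prod_sdiff hB]

/-- The signed summand attached to a pair of ordered partitions with `k` blocks. -/
def partitionTerm (w : ι → K) (w' : κ → K) (J : Fin k → Finset ι) (J' : Fin k → Finset κ) : K :=
  (-1) ^ (k + inversionCount J + inversionCount J') *
    ∏ j, (prodRatio w w' (J j) (J' j) ^ ((∑ i with i < j, #(J i)) + 1) *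
      minor (cauchyMatrix w w') (J j) (J' j))

theorem partitionTerm_snoc (w : ι → K) (w' : κ → K) {S : Finset ι} {T : Finset κ}
    {J : Fin k → Finset ι} {J' : Fin k → Finset κ}
    (hJ : J ∈ orderedPartitions k S) (hJ' : J' ∈ orderedPartitions k T)
    (A : Finset ι) (B : Finset κ) :
    partitionTerm w w' (Fin.snoc J A : Fin (k + 1) → Finset ι) (Fin.snoc J' B) =
      -((-1) ^ (ascentCount A S + ascentCount B T) * (prodRatio w w' A B ^ (#S + 1) *
        minor (cauchyMatrix w w') A B)) * partitionTerm w w' J J' := by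
  have hlt (j : Fin k) : ∑ i with i < j.castSucc,
      #((Fin.snoc J A : Fin (k + 1) → Finset ι) i) = ∑ i with i < j, #(J i) := by
    simp [sum_filter, Fin.sum_univ_castSucc, (Fin.le_last _).not_gt]
  have hlast : ∑ i with i < Fin.last k, #((Fin.snoc J A : Fin (k + 1) → Finset ι) i) = #S := by
    simp [sum_filter, Fin.sum_univ_castSucc, Fin.castSucc_lt_last,
      ← sum_card_of_mem_orderedPartitions hJ]
  rw [partitionTerm, partitionTerm, inversionCount_snoc hJ, inversionCount_snoc hJ',
    Fin.prod_univ_castSucc]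
  simp only [hlt, hlast, Fin.snoc_castSucc, Fin.snoc_last, pow_add]
  ring

/-- The sum of `partitionTerm` over the pairs of ordered partitions of `S` and `T` into `k` blocks
of matching sizes. -/
def partitionSum (w : ι → K) (w' : κ → K) (k : ℕ) (S : Finset ι) (T : Finset κ) : K :=
  ∑ J ∈ orderedPartitions k S, ∑ J' ∈ orderedPartitions k T with ∀ j, #(J j) = #(J' j),
    partitionTerm w w' J J'

theorem partitionTerm_of_card_ne (w : ι → K) (w' : κ → K) {J : Fin k → Finset ι}
    {J' : Fin k → Finset κ} {j : Fin k} (h : #(J j) ≠ #(J' j)) : partitionTerm w w' J J' = 0 := by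
  rw [partitionTerm, prod_eq_zero (mem_univ j) (by rw [minor_of_card_ne _ h, mul_zero]), mul_zero]

theorem partitionSum_eq_sum_sum (w : ι → K) (w' : κ → K) (k : ℕ) (S : Finset ι) (T : Finset κ) :
    partitionSum w w' k S T =
      ∑ J ∈ orderedPartitions k S, ∑ J' ∈ orderedPartitions k T, partitionTerm w w' J J' := by
  refine sum_congr rfl fun J _ => sum_filter_of_ne fun J' _ hne j => ?_
  by_contra hj
  exact hne (partitionTerm_of_card_ne w w' hj)

theorem partitionSum_zero_empty_empty (w : ι → K) (w' : κ → K) : partitionSum w w' 0 ∅ ∅ = 1 := by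
  simp [partitionSum_eq_sum_sum, orderedPartitions_zero_empty, partitionTerm, inversionCount]

theorem partitionSum_zero_of_nonempty (w : ι → K) (w' : κ → K) {S : Finset ι} (hS : S.Nonempty)
    (T : Finset κ) : partitionSum w w' 0 S T = 0 := by
  rw [partitionSum, orderedPartitions_zero_of_nonempty hS, sum_empty]

theorem partitionSum_succ (w : ι → K) (w' : κ → K) (k : ℕ) (S : Finset ι) (T : Finset κ) :
    partitionSum w w' (k + 1) S T = ∑ A ∈ S.powerset.erase ∅, ∑ B ∈ T.powerset,
      -((-1) ^ (ascentCount A (S \ A) + ascentCount B (T \ B)) *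
        (prodRatio w w' A B ^ (#(S \ A) + 1) * minor (cauchyMatrix w w') A B)) *
        partitionSum w w' k (S \ A) (T \ B) := by
  simp only [partitionSum_eq_sum_sum, sum_orderedPartitions_succ]
  refine sum_congr rfl fun A hA => ?_
  have hempty : minor (cauchyMatrix w w') A ∅ = 0 :=
    minor_of_card_ne _ (by simpa using (mem_erase.1 hA).1)
  rw [sum_comm, ← sum_erase T.powerset (a := ∅) (by rw [hempty]; simp)]
  refine sum_congr rfl fun B _ => ?_
  rw [mul_sum]
  refine sum_congr rfl fun J hJ => ?_
  rw [mul_sum]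
  exact sum_congr rfl fun J' hJ' => partitionTerm_snoc w w' hJ hJ' A B

theorem minor_scaled_add_smul_eq_zero {w : ι → K} {w' : κ → K} {S : Finset ι} {T : Finset κ}
    (hS : S.Nonempty) (hST : #S = #T) (hw : ∀ i ∈ S, w i ≠ 0)
    (hww' : ∀ i ∈ S, ∀ j ∈ T, w i ≠ w' j) :
    minor ((of fun i j => (w i)⁻¹ * (w' j * cauchyMatrix w w' i j)) +
      prodRatio w w' S T • (cauchyMatrix w' w)ᵀ) S T = 0 := by
  have : Nonempty (Fin #S) := ⟨⟨0, hS.card_pos⟩⟩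
  rw [minor_eq_det _ rfl hST.symm, transpose_cauchyMatrix]
  set r := S.orderEmbOfFin rfl
  set c := T.orderEmbOfFin hST.symm
  set C := (cauchyMatrix w w').submatrix r c with hC
  have hr (a : Fin #S) : r a ∈ S := orderEmbOfFin_mem _ _ _
  have hdisplacement (a b : Fin #S) : (w (r a) - w' (c b)) * C a b = 1 :=
    mul_one_div_cancel (sub_ne_zero.2 (hww' _ (hr a) _ (orderEmbOfFin_mem _ _ _)))
  have hratio : prodRatio w w' S T * ∏ a, w (r a) = ∏ b, w' (c b) := by
    rw [prod_orderEmbOfFin rfl w, prod_orderEmbOfFin hST.symm w', prodRatio,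
      div_mul_cancel₀ _ (prod_ne_zero_iff.2 hw)]
  have hscale : (of fun a b => (w (r a))⁻¹ *
      (of fun a b => (w' (c b) - prodRatio w w' S T * w (r a)) * C a b) a b).det = 0 := by
    rw [det_mul_column, det_sub_mul_mul_eq_zero hdisplacement hratio, mul_zero]
  rw [← hscale]
  congr 1
  ext a b
  have hwa : w (r a) ≠ 0 := hw _ (hr a)
  simp only [hC, submatrix_apply, Matrix.add_apply, Matrix.smul_apply, Matrix.neg_apply, of_apply,
    smul_eq_mul]
  field_simp
  ring

theorem sum_prodRatio_mul_minor_mul_minor {w : ι → K} {w' : κ → K} {S : Finset ι} {T : Finset κ}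
    (hS : S.Nonempty) (hST : #S = #T) (hw : ∀ i ∈ S, w i ≠ 0)
    (hww' : ∀ i ∈ S, ∀ j ∈ T, w i ≠ w' j) :
    ∑ A ∈ S.powerset.erase ∅, ∑ B ∈ T.powerset,
      -((-1) ^ (ascentCount A (S \ A) + ascentCount B (T \ B)) *
        (prodRatio w w' A B * minor (cauchyMatrix w w') A B)) *
        (prodRatio w w' S T ^ #(S \ A) * minor (cauchyMatrix w' w)ᵀ (S \ A) (T \ B)) =
      prodRatio w w' S T ^ #S * minor (cauchyMatrix w' w)ᵀ S T := by
  have hzero := minor_scaled_add_smul_eq_zero hS hST hw hww'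
  rw [minor_add, ← add_sum_erase _ _ (empty_mem_powerset S), laplaceSum_empty_left,
    ascentCount_empty_left, sdiff_empty, pow_zero, one_mul, minor_smul] at hzero
  rw [eq_comm, ← sub_eq_zero, ← hzero, sub_eq_add_neg, ← sum_neg_distrib]
  congr 1
  refine sum_congr rfl fun A _ => ?_
  rw [laplaceSum, mul_sum, ← sum_neg_distrib]
  refine sum_congr rfl fun B _ => ?_
  rw [minor_of_mul_mul (fun i => (w i)⁻¹) w', minor_smul, prod_inv_distrib, prodRatio]
  ring

theorem sum_range_partitionSum_empty (w : ι → K) (w' : κ → K) (N : ℕ) :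
    ∑ k ∈ range (N + 1), partitionSum w w' k ∅ ∅ = 1 := by
  simp [sum_range_succ', partitionSum_succ, partitionSum_zero_empty_empty]

theorem sum_range_partitionSum {w : ι → K} {w' : κ → K} {S : Finset ι} {T : Finset κ} {N : ℕ}
    (hN : #S ≤ N) (hST : #S = #T) (hw : ∀ i ∈ S, w i ≠ 0)
    (hww' : ∀ i ∈ S, ∀ j ∈ T, w i ≠ w' j) :
    ∑ k ∈ range (N + 1), partitionSum w w' k S T =
      prodRatio w w' S T ^ #S * minor (cauchyMatrix w' w)ᵀ S T := by
  induction N using Nat.strong_induction_on generalizing S T with | _ N ih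
  obtain rfl | hS := S.eq_empty_or_nonempty
  · obtain rfl : T = ∅ := card_eq_zero.1 hST.symm
    simp [sum_range_partitionSum_empty, minor_empty_empty]
  obtain ⟨N, rfl⟩ := Nat.exists_eq_succ_of_ne_zero (hS.card_pos.trans_le hN).ne'
  rw [sum_range_succ', partitionSum_zero_of_nonempty w w' hS, add_zero,
    ← sum_prodRatio_mul_minor_mul_minor hS hST hw hww']
  simp only [partitionSum_succ]
  rw [sum_comm]
  refine sum_congr rfl fun A hA => ?_
  rw [sum_comm]
  refine sum_congr rfl fun B hB => ?_
  rw [mem_erase, ← nonempty_iff_ne_empty, mem_powerset] at hA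
  rw [mem_powerset] at hB
  by_cases hAB : #A = #B
  · have hcard : #(S \ A) = #(T \ B) := by
      rw [card_sdiff_of_subset hA.2, card_sdiff_of_subset hB, hST, hAB]
    have hlt : #(S \ A) < #S := card_lt_card (sdiff_ssubset hA.2 hA.1)
    have hrec := ih N N.lt_succ_self (by omega) hcard (fun i hi => hw i (sdiff_subset hi))
      fun i hi j hj => hww' i (sdiff_subset hi) j (sdiff_subset hj)
    rw [← mul_sum, hrec, ← prodRatio_mul_prodRatio_sdiff w w' hA.2 hB]
    ring
  · simp [minor_of_card_ne _ hAB]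

theorem ordered_partition_sum_identity_general {w : ι → K} {w' : κ → K} {S : Finset ι}
    {T : Finset κ} (hS : S.Nonempty) (hST : #S = #T) (hw : ∀ i ∈ S, w i ≠ 0)
    (hww' : ∀ i ∈ S, ∀ j ∈ T, w i ≠ w' j) :
    ∑ k ∈ Icc 1 #S, partitionSum w w' k S T =
      prodRatio w w' S T ^ #S * minor (cauchyMatrix w' w)ᵀ S T := by
  rw [← sum_range_partitionSum le_rfl hST hw hww', sum_range_succ',
    partitionSum_zero_of_nonempty w w' hS, add_zero, range_eq_Ico,
    sum_Ico_add' (partitionSum w w' · S T), zero_add, Ico_add_one_right_eq_Icc]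

end PartitionSum

theorem sum_sum_ite_eq_partitionSum {n : ℕ} (w w' : Fin n → ℂ) (k : ℕ) :
    (∑ J : Fin k → Finset (Fin n), ∑ J' : Fin k → Finset (Fin n),
      if ((∀ i, (J i).Nonempty) ∧ (∀ i, (J' i).Nonempty) ∧
          (∀ i j, i ≠ j → Disjoint (J i) (J j)) ∧
          (∀ i j, i ≠ j → Disjoint (J' i) (J' j)) ∧
          univ.biUnion J = univ ∧ univ.biUnion J' = univ ∧ (∀ i, #(J i) = #(J' i))) then
        (-1 : ℂ) ^ (k + hashTuple J + hashTuple J') *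
          ∏ j, (((∏ i ∈ J' j, w' i) / ∏ i ∈ J j, w i) ^ ((∑ i with i < j, #(J i)) + 1) *
            cauchySubDet w w' (J j) (J' j))
      else 0) = partitionSum w w' k univ univ := by
  have hmem (f : (Fin k → Finset (Fin n)) → ℂ) : ∑ J ∈ orderedPartitions k univ, f J =
      ∑ J, if J ∈ orderedPartitions k univ then f J else 0 := by
    rw [sum_ite_mem, univ_inter]
  rw [partitionSum, hmem]
  refine sum_congr rfl fun J _ => ?_
  split_ifs with hJ
  · rw [sum_filter, hmem]
    refine sum_congr rfl fun J' _ => ?_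
    rw [mem_orderedPartitions] at hJ
    rw [← ite_and]
    exact if_congr (by rw [mem_orderedPartitions]; tauto) rfl rfl
  · refine sum_eq_zero fun J' _ => if_neg fun h => hJ ?_
    exact mem_orderedPartitions.2 ⟨h.1, h.2.2.1, h.2.2.2.2.1⟩

end

/-- Summation over pairs of ordered partitions (Lemma: identity_02). The inner
sum is over all pairs of ordered partitions `(J_1,…,J_k)`, `(J'_1,…,J'_k)` of
`{1,…,n}` into nonempty subsets with `|J_i| = |J'_i|` for all `i`. -/
theorem ordered_partition_sum_identity
    (n : ℕ) (hn : 1 ≤ n) (w w' : Fin n → ℂ)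
    (hw : ∀ i, w i ≠ 0) (hw' : ∀ i, w' i ≠ 0) (hww' : ∀ i j, w i ≠ w' j) :
    (∑ k ∈ Finset.Icc 1 n,
      ∑ J : Fin k → Finset (Fin n), ∑ J' : Fin k → Finset (Fin n),
        if ((∀ i, (J i).Nonempty) ∧ (∀ i, (J' i).Nonempty) ∧
            (∀ i j, i ≠ j → Disjoint (J i) (J j)) ∧
            (∀ i j, i ≠ j → Disjoint (J' i) (J' j)) ∧
            Finset.univ.biUnion J = Finset.univ ∧
            Finset.univ.biUnion J' = Finset.univ ∧
            (∀ i, (J i).card = (J' i).card)) then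
          (-1 : ℂ) ^ (k + hashTuple J + hashTuple J') *
            ∏ j : Fin k,
              (((∏ i ∈ J' j, w' i) / ∏ i ∈ J j, w i) ^
                  ((∑ i ∈ Finset.univ.filter (fun i => i < j), (J i).card) + 1) *
                cauchySubDet w w' (J j) (J' j))
        else 0) =
      (∏ j : Fin n, (w' j / w j) ^ n) *
        Matrix.det (Matrix.of fun i i' : Fin n => 1 / (w' i' - w i)) := by
  have : Nonempty (Fin n) := ⟨⟨0, hn⟩⟩
  have hgeneral := ordered_partition_sum_identity_general Finset.univ_nonempty rfl
    (fun i _ => hw i) fun i _ j _ => hww' i j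
  rw [Finset.card_fin, minor_univ, prodRatio, ← Finset.prod_div_distrib, ← Finset.prod_pow]
    at hgeneral
  simp only [sum_sum_ite_eq_partitionSum]
  exact hgeneral
end

section
/- Let m ≥ 1 and let S_1,…,S_m and S′_1,…,S′_m be finite sets; let Σ be the disjoint union of the S_i and Σ′ the disjoint union of the S′_i. Let A : Σ × Σ′ → ℂ and B : Σ′ × Σ → ℂ satisfy the block conditions: A(w,w′) = 0 unless there is an index i with w ∈ S_{2i−1} ∪ S_{2i} and w′ ∈ S′_{2i−1} ∪ S′_{2i}; and B(w′,w) = 0 unless there is an index i with w′ ∈ S′_{2i} ∪ S′_{2i+1} and w ∈ S_{2i} ∪ S_{2i+1} (sets with index outside {1,…,m} being empty). Then det(I − AB) = ∑_{(n_1,…,n_m) ∈ ℕ^m} ( (−1)^{n_1+⋯+n_m} / (n_1! ⋯ n_m!)^2 ) ∑ det[A(w_a, w′_b)]_{a,b=1}^{|n|} · det[B(w′_a, w_b)]_{a,b=1}^{|n|}, where |n| = n_1+⋯+n_m, AB is the Σ×Σ matrix (AB)(w,ŵ) = ∑_{w′∈Σ′} A(w,w′)B(w′,ŵ), the inner sum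 is over all tuples (w_1,…,w_{|n|}) and (w′_1,…,w′_{|n|}) such that for each ℓ the entries with indices n_1+⋯+n_{ℓ−1}+1,…,n_1+⋯+n_ℓ lie in S_ℓ and S′_ℓ respectively, and all but finitely many terms of the outer sum vanish (the term indexed by n is zero whenever n_ℓ > |S_ℓ| for some ℓ, since the corresponding determinants have repeated rows). -/
open scoped BigOperators

/-- The term of index `nn = (n_1,…,n_m)` in the block Fredholm expansion:
`((−1)^{|nn|}/(nn!)²) ∑ det[A(w_a,w'_b)] det[B(w'_a,w_b)]`, the sum being over
all tuples with `n_ℓ` entries `w` in `S ℓ` and `n_ℓ` entries `w'` in `S' ℓ`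
for each `ℓ`; both determinants are indexed by the sigma type
`(ℓ : Fin m) × Fin (nn ℓ)`, which lists the entries block by block. -/
noncomputable def fredholmTerm {m : ℕ} (S S' : Fin m → Type)
    [∀ i, Fintype (S i)] [∀ i, DecidableEq (S i)]
    [∀ i, Fintype (S' i)] [∀ i, DecidableEq (S' i)]
    (A : ((i : Fin m) × S i) → ((i : Fin m) × S' i) → ℂ)
    (B : ((i : Fin m) × S' i) → ((i : Fin m) × S i) → ℂ)
    (nn : Fin m → ℕ) : ℂ :=
  ((-1 : ℂ) ^ (∑ i, nn i) / (∏ i, (Nat.factorial (nn i) : ℂ)) ^ 2) *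
    ∑ ww : (ℓ : Fin m) → Fin (nn ℓ) → S ℓ, ∑ ww' : (ℓ : Fin m) → Fin (nn ℓ) → S' ℓ,
      Matrix.det (Matrix.of fun a b : (ℓ : Fin m) × Fin (nn ℓ) =>
          A ⟨a.1, ww a.1 a.2⟩ ⟨b.1, ww' b.1 b.2⟩) *
        Matrix.det (Matrix.of fun a b : (ℓ : Fin m) × Fin (nn ℓ) =>
          B ⟨a.1, ww' a.1 a.2⟩ ⟨b.1, ww b.1 b.2⟩)

/-!
`det (1 - A * B)` is the determinant of `[[1, A], [B, 1]]`, hence the sum of the principal minors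
of `[[0, A], [B, 0]]`, taken over `U ⊆ Σ` and `U' ⊆ Σ'`. A nonzero such minor yields bijections
between `U` and `U'` along nonzero entries of `A` and of `B`, so `U` and `U'` have equally many
elements in every group of blocks linked by `A` and in every group linked by `B`. View a block as
an edge joining its `A`-group to its `B`-group. These edges form a path, and peeling off its leaves
shows that `U` and `U'` have equally many elements in every single block, say `n i` in block `i`.
The minor on `U` and `U'` is then `(-1) ^ |n|` times a product of the two determinants in the
expansion, and the pair is listed `(∏ i, (n i)!) ^ 2` times by block-respecting tuples; tuples with
a repetition contribute nothing.
-/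

noncomputable section

open Finset Matrix

section Determinant

variable {R κ κ' : Type*} [CommRing R] [Fintype κ] [DecidableEq κ] [Fintype κ'] [DecidableEq κ']

theorem det_one_add_eq_sum_principal_minors (M : Matrix κ κ R) :
    (1 + M).det = ∑ U : Finset κ, (M.submatrix (↑) (↑) : Matrix U U R).det := by
  rw [add_comm]
  refine ((detRowAlternating (n := κ) (R := R)).map_add_univ M.row (1 : Matrix κ κ R).row).trans ?_
  exact sum_congr rfl fun U _ => det_piecewise_one_eq_submatrix_det M U

theorem det_fromBlocks_zero_one_one_zero :
    (fromBlocks 0 1 1 0 : Matrix (κ ⊕ κ) (κ ⊕ κ) R).det = (-1) ^ Fintype.card κ := by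
  have row_op : (fromBlocks 1 1 0 1 * fromBlocks 0 1 1 0 : Matrix (κ ⊕ κ) (κ ⊕ κ) R) =
      fromBlocks 1 1 1 0 := by
    simp [fromBlocks_multiply]
  simpa [det_neg] using congrArg det row_op

theorem det_fromBlocks_zero_diag (A B : Matrix κ κ R) :
    (fromBlocks 0 A B 0).det = (-1) ^ Fintype.card κ * (A.det * B.det) := by
  have factor : fromBlocks 0 A B 0 = fromBlocks 0 1 1 0 * fromBlocks B 0 0 A := by
    simp [fromBlocks_multiply]
  rw [factor, det_mul, det_fromBlocks_zero_one_one_zero, det_fromBlocks_zero₂₁, mul_comm B.det]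

theorem exists_equiv_of_det_fromBlocks_zero_diag_ne_zero {A : Matrix κ κ' R} {B : Matrix κ' κ R}
    (h : (fromBlocks 0 A B 0).det ≠ 0) : ∃ e : κ' ≃ κ, ∀ y, A (e y) y ≠ 0 := by
  rw [det_apply] at h
  obtain ⟨σ, -, hσ⟩ := exists_ne_zero_of_sum_ne_zero h
  have entry_ne_zero (u : κ ⊕ κ') : fromBlocks 0 A B 0 (σ u) u ≠ 0 := fun hu =>
    hσ (by rw [prod_eq_zero (f := fun v => fromBlocks 0 A B 0 (σ v) v) (mem_univ u) hu, smul_zero])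
  have right_to_left (y : κ') : ∃ x, σ (Sum.inr y) = Sum.inl x ∧ A x y ≠ 0 := by
    have := entry_ne_zero (Sum.inr y)
    cases hy : σ (Sum.inr y) <;> simp_all
  have left_from_right (x : κ) : ∃ y, σ (Sum.inr y) = Sum.inl x := by
    have := entry_ne_zero (σ.symm (Sum.inl x))
    rw [σ.apply_symm_apply] at this
    cases hx : σ.symm (Sum.inl x) with
    | inl _ => simp [hx] at this
    | inr y => exact ⟨y, by rw [← hx, σ.apply_symm_apply]⟩
  choose e he hA using right_to_left
  refine ⟨Equiv.ofBijective e ⟨fun y y' hyy' => ?_, fun x => ?_⟩, hA⟩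
  · exact Sum.inr_injective (σ.injective (by rw [he, he, hyy']))
  · obtain ⟨y, hy⟩ := left_from_right x
    exact ⟨y, Sum.inl_injective ((he y).symm.trans hy)⟩

theorem map_univ_eq_of_det_fromBlocks_zero_diag_ne_zero {γ : Type*} {A : Matrix κ κ' R}
    {B : Matrix κ' κ R} {f : κ → γ} {f' : κ' → γ} (hA : ∀ x y, f x ≠ f' y → A x y = 0)
    (h : (fromBlocks 0 A B 0).det ≠ 0) :
    (univ : Finset κ).val.map f = (univ : Finset κ').val.map f' := by
  obtain ⟨e, he⟩ := exists_equiv_of_det_fromBlocks_zero_diag_ne_zero h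
  have hf : f ∘ e = f' := funext fun y => by_contra fun hy => he y (hA _ _ hy)
  rw [← hf, ← Multiset.map_map, Multiset.map_univ_val_equiv]

end Determinant

section CrossMinor

variable {R α α' : Type*} [CommRing R] [DecidableEq α] [DecidableEq α']

/-- The principal minor of `[[0, A], [B, 0]]` on the rows and columns `U ⊔ U'`. It is defined also
when `U` and `U'` differ in size; when they do not, it is `± det A[U, U'] * det B[U', U]`. -/
def crossMinor (A : Matrix α α' R) (B : Matrix α' α R) (U : Finset α) (U' : Finset α') : R :=
  (fromBlocks 0 (A.submatrix (↑) (↑) : Matrix U U' R) (B.submatrix (↑) (↑)) 0).det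

theorem det_one_sub_mul_eq_sum_crossMinor [Fintype α] [Fintype α']
    (A : Matrix α α' R) (B : Matrix α' α R) :
    (1 - A * B).det = ∑ U, ∑ U', crossMinor A B U U' := by
  have split : fromBlocks 1 A B 1 = 1 + fromBlocks 0 A B 0 := by
    rw [← fromBlocks_one, fromBlocks_add]
    simp
  rw [← det_fromBlocks_one₂₂, split, det_one_add_eq_sum_principal_minors,
    ← Finset.sumEquiv.symm.toEquiv.sum_comp, Fintype.sum_prod_type]
  refine sum_congr rfl fun U _ => sum_congr rfl fun U' _ => ?_
  let e : U ⊕ U' ≃ U.disjSum U' :=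
    ((Equiv.subtypeEquivRight fun _ => inl_mem_disjSum.symm).sumCongr
      (Equiv.subtypeEquivRight fun _ => inr_mem_disjSum.symm)).trans
      (Equiv.subtypeSum (p := (· ∈ U.disjSum U'))).symm
  refine (det_submatrix_equiv_self e _).symm.trans (congrArg det ?_)
  ext (a | a) (b | b) <;> rfl

theorem crossMinor_image_image {κ : Type*} [Fintype κ] [DecidableEq κ] (A : Matrix α α' R)
    (B : Matrix α' α R) {f : κ → α} {f' : κ → α'} (hf : f.Injective) (hf' : f'.Injective) :
    crossMinor A B (univ.image f) (univ.image f') =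
      (-1) ^ Fintype.card κ * ((A.submatrix f f').det * (B.submatrix f' f).det) := by
  let e : κ ≃ univ.image f :=
    (Equiv.ofInjective f hf).trans (Equiv.subtypeEquivRight fun _ => by simp)
  let e' : κ ≃ univ.image f' :=
    (Equiv.ofInjective f' hf').trans (Equiv.subtypeEquivRight fun _ => by simp)
  rw [crossMinor, ← det_submatrix_equiv_self (e.sumCongr e'), ← det_fromBlocks_zero_diag]
  congr 1
  ext (a | a) (b | b) <;> rfl

theorem det_submatrix_mul_det_submatrix_eq_crossMinor {κ : Type*} [Fintype κ] [DecidableEq κ]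
    (A : Matrix α α' R) (B : Matrix α' α R) (f : κ → α) (f' : κ → α') [Decidable f.Injective]
    [Decidable f'.Injective] :
    (-1) ^ Fintype.card κ * ((A.submatrix f f').det * (B.submatrix f' f).det) =
      if f.Injective then
        if f'.Injective then crossMinor A B (univ.image f) (univ.image f') else 0
      else 0 := by
  split_ifs with hf hf'
  · exact (crossMinor_image_image A B hf hf').symm
  · obtain ⟨a, b, hab, hne⟩ := Function.not_injective_iff.mp hf'
    rw [det_zero_of_column_eq hne fun i => by simp [hab], zero_mul, mul_zero]
  · obtain ⟨a, b, hab, hne⟩ := Function.not_injective_iff.mp hf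
    rw [det_zero_of_row_eq hne (by ext; simp [hab]), zero_mul, mul_zero]

theorem crossMinor_comm (A : Matrix α α' R) (B : Matrix α' α R) (U : Finset α) (U' : Finset α') :
    crossMinor A B U U' = crossMinor B A U' U := by
  rw [crossMinor, crossMinor, ← det_submatrix_equiv_self (Equiv.sumComm U' U)]
  exact congrArg det (fromBlocks_submatrix_sum_swap_sum_swap _ _ _ _)

theorem map_eq_map_of_crossMinor_ne_zero {γ : Type*} {A : Matrix α α' R} {B : Matrix α' α R}
    {f : α → γ} {f' : α' → γ} (hA : ∀ x y, f x ≠ f' y → A x y = 0) {U : Finset α} {U' : Finset α'}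
    (h : crossMinor A B U U' ≠ 0) : U.val.map f = U'.val.map f' := by
  calc U.val.map f
    _ = (univ : Finset U).val.map fun x : U => f x := (Multiset.attach_map_val' U.val f).symm
    _ = (univ : Finset U').val.map fun y : U' => f' y :=
      map_univ_eq_of_det_fromBlocks_zero_diag_ne_zero (fun x y => hA x y) h
    _ = U'.val.map f' := Multiset.attach_map_val' U'.val f'

end CrossMinor

section Listing

theorem card_injective_listings {α κ : Type*} [Fintype α] [DecidableEq α] [Fintype κ]
    [DecidableEq κ] {T : Finset α} (hT : #T = Fintype.card κ) :
    #{f : κ → α | f.Injective ∧ univ.image f = T} = (Fintype.card κ).factorial := by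
  have e : κ ≃ T := Fintype.equivOfCardEq (by simp [hT])
  have listings_eq : ({f | f.Injective ∧ univ.image f = T} : Finset (κ → α)) =
      univ.image fun g : κ ≃ T => ((↑) : T → α) ∘ g := by
    ext f
    simp only [mem_filter_univ, mem_image_univ_iff_mem_range, Set.mem_range]
    constructor
    · rintro ⟨hf, rfl⟩
      exact ⟨(Equiv.ofInjective f hf).trans (Equiv.subtypeEquivRight fun _ => by simp), rfl⟩
    · rintro ⟨g, rfl⟩
      refine ⟨Subtype.val_injective.comp g.injective, ?_⟩
      rw [← image_image, image_univ_equiv, univ_eq_attach, attach_image_val]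
  rw [listings_eq, card_image_of_injective, card_univ, Fintype.card_equiv e]
  exact Subtype.val_injective.comp_left.comp DFunLike.coe_injective

variable {ι : Type*} {S S' : ι → Type*} [DecidableEq ι] [∀ i, Fintype (S i)]
  [∀ i, DecidableEq (S i)] [∀ i, Fintype (S' i)] [∀ i, DecidableEq (S' i)]

/-- The number of elements of `U` in each block of the disjoint union. -/
def blockCard (U : Finset ((i : ι) × S i)) (i : ι) : ℕ :=
  #{s : S i | ⟨i, s⟩ ∈ U}

theorem count_map_fst (U : Finset ((i : ι) × S i)) (i : ι) :
    (U.val.map Sigma.fst).count i = blockCard U i := by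
  rw [Multiset.count_map, blockCard, ← card_map (Function.Embedding.sigmaMk i)]
  change #{x ∈ U | i = x.1} = _
  congr 1
  ext ⟨j, s⟩
  aesop

theorem blockCard_eq_of_crossMinor_ne_zero {R γ δ : Type*} [CommRing R] {c : ι → γ} {d : ι → δ}
    (hcd : ∀ s t : Multiset ι, s.map c = t.map c → s.map d = t.map d → s = t)
    {A : Matrix ((i : ι) × S i) ((i : ι) × S' i) R} {B : Matrix ((i : ι) × S' i) ((i : ι) × S i) R}
    (hA : ∀ x y, c x.1 ≠ c y.1 → A x y = 0) (hB : ∀ y x, d y.1 ≠ d x.1 → B y x = 0)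
    {U : Finset ((i : ι) × S i)} {U' : Finset ((i : ι) × S' i)} (h : crossMinor A B U U' ≠ 0) :
    blockCard U' = blockCard U := by
  have hc : U.val.map (c ∘ Sigma.fst) = U'.val.map (c ∘ Sigma.fst) :=
    map_eq_map_of_crossMinor_ne_zero hA h
  have hd : U'.val.map (d ∘ Sigma.fst) = U.val.map (d ∘ Sigma.fst) :=
    map_eq_map_of_crossMinor_ne_zero hB (crossMinor_comm A B U U' ▸ h)
  simp only [← Multiset.map_map] at hc hd
  have hmap : U.val.map Sigma.fst = U'.val.map Sigma.fst := hcd _ _ hc hd.symm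
  funext i
  rw [← count_map_fst, ← count_map_fst, hmap]

variable [Fintype ι]

theorem blockCard_image_sigmaMap {n : ι → ℕ} {w : (i : ι) → Fin (n i) → S i}
    (hw : (Sigma.map id w).Injective) : blockCard (univ.image (Sigma.map id w)) = n := by
  funext i
  rw [← count_map_fst, image_val_of_injOn hw.injOn, Multiset.map_map]
  exact (count_map_fst univ i).trans (by simp [blockCard])

theorem card_injective_block_listings (U : Finset ((i : ι) × S i)) :
    #{w : (i : ι) → Fin (blockCard U i) → S i |
        (Sigma.map id w).Injective ∧ univ.image (Sigma.map id w) = U} =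
      ∏ i, (blockCard U i).factorial := by
  have blockwise : ({w | (Sigma.map id w).Injective ∧ univ.image (Sigma.map id w) = U} :
      Finset ((i : ι) → Fin (blockCard U i) → S i)) = Fintype.piFinset fun i =>
        {f | f.Injective ∧ univ.image f = ({s | ⟨i, s⟩ ∈ U} : Finset (S i))} := by
    ext w
    simp only [mem_filter_univ, Fintype.mem_piFinset, forall_and,
      Function.injective_id.sigma_map_iff]
    refine and_congr_right fun _ => ?_
    simp [Finset.ext_iff, Sigma.map, Sigma.forall, Sigma.exists, Sigma.ext_iff]
  rw [blockwise, Fintype.card_piFinset]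
  refine prod_congr rfl fun i _ => ?_
  exact (card_injective_listings (Fintype.card_fin _).symm).trans
    (by rw [Fintype.card_fin, blockCard])

theorem sum_injective_block_listings {M : Type*} [AddCommMonoid M] (n : ι → ℕ)
    (F : Finset ((i : ι) × S i) → M) :
    (∑ w : (i : ι) → Fin (n i) → S i,
        if (Sigma.map id w).Injective then F (univ.image (Sigma.map id w)) else 0) =
      (∏ i, (n i).factorial) • ∑ U with blockCard U = n, F U := by
  rw [← sum_filter, smul_sum, ← sum_fiberwise_of_maps_to
    (g := fun w : (i : ι) → Fin (n i) → S i => univ.image (Sigma.map id w))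
    (t := {U | blockCard U = n})
    fun w hw => (mem_filter_univ _).mpr (blockCard_image_sigmaMap (mem_filter.mp hw).2)]
  refine sum_congr rfl fun U hU => ?_
  obtain rfl := (mem_filter.mp hU).2
  rw [filter_filter, sum_congr rfl fun w hw => congrArg F (mem_filter.mp hw).2.2, sum_const,
    card_injective_block_listings]

theorem sum_block_listings_det_mul_det {R : Type*} [CommRing R]
    (A : Matrix ((i : ι) × S i) ((i : ι) × S' i) R) (B : Matrix ((i : ι) × S' i) ((i : ι) × S i) R)
    (n : ι → ℕ) :
    (-1) ^ (∑ i, n i) * ∑ w : (i : ι) → Fin (n i) → S i, ∑ w' : (i : ι) → Fin (n i) → S' i,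
      (A.submatrix (Sigma.map id w) (Sigma.map id w')).det *
        (B.submatrix (Sigma.map id w') (Sigma.map id w)).det =
    (∏ i, ((n i).factorial : R)) ^ 2 *
      ∑ U with blockCard U = n, ∑ U' with blockCard U' = n, crossMinor A B U U' := by
  have hcard : ∑ i, n i = Fintype.card ((i : ι) × Fin (n i)) := by simp
  simp_rw [hcard, mul_sum, det_submatrix_mul_det_submatrix_eq_crossMinor, sum_ite_irrel,
    sum_const_zero, sum_injective_block_listings n (crossMinor A B _)]
  rw [sum_injective_block_listings n fun U =>
    (∏ i, (n i).factorial) • ∑ U' with blockCard U' = n, crossMinor A B U U']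
  simp_rw [← smul_sum, nsmul_eq_mul, Nat.cast_prod, ← mul_sum]
  ring

end Listing

section Forest

theorem mem_of_map_eq_map_of_forall_le {ι γ : Type*} [LE ι] {c : ι → γ} {s t : Multiset ι}
    {i : ι} (hc : s.map c = t.map c) (hi : i ∈ s) (hle : ∀ j ∈ t, i ≤ j)
    (hleaf : ∀ j, i ≤ j → c j = c i → j = i) : i ∈ t := by
  obtain ⟨j, hj, hji⟩ := Multiset.mem_map.mp (hc ▸ Multiset.mem_map_of_mem c hi)
  exact hleaf j (hle j hj) hji ▸ hj

-- If `i` is an edge joining `c i` to `d i`, then `hleaf` says that each edge has an endpoint which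
-- is a leaf once all smaller edges are removed.
theorem multiset_eq_of_map_eq_map {ι γ δ : Type*} [LinearOrder ι] {c : ι → γ} {d : ι → δ}
    (hleaf : ∀ i, (∀ j, i ≤ j → c j = c i → j = i) ∨ ∀ j, i ≤ j → d j = d i → j = i)
    (s t : Multiset ι) (hc : s.map c = t.map c) (hd : s.map d = t.map d) : s = t := by
  induction hk : s.card generalizing s t with
  | zero =>
    rw [Multiset.card_eq_zero] at hk
    subst hk
    exact (Multiset.map_eq_zero.mp hc.symm).symm
  | succ k ih =>
    obtain ⟨i₀, hi₀⟩ := Multiset.card_pos_iff_exists_mem.mp (by lia : 0 < s.card)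
    obtain ⟨i, hi, hmin⟩ := (s + t).toFinset.exists_min_image id
      ⟨i₀, Multiset.mem_toFinset.mpr (Multiset.mem_add.mpr (Or.inl hi₀))⟩
    simp only [Multiset.mem_toFinset, Multiset.mem_add, id] at hi hmin
    have his : i ∈ s := hi.elim id fun hit => (hleaf i).elim
      (mem_of_map_eq_map_of_forall_le hc.symm hit fun j hj => hmin j (Or.inl hj))
      (mem_of_map_eq_map_of_forall_le hd.symm hit fun j hj => hmin j (Or.inl hj))
    have hit : i ∈ t := (hleaf i).elim
      (mem_of_map_eq_map_of_forall_le hc his fun j hj => hmin j (Or.inr hj))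
      (mem_of_map_eq_map_of_forall_le hd his fun j hj => hmin j (Or.inr hj))
    obtain ⟨s, rfl⟩ := Multiset.exists_cons_of_mem his
    obtain ⟨t, rfl⟩ := Multiset.exists_cons_of_mem hit
    simp only [Multiset.map_cons, Multiset.cons_inj_right] at hc hd ⊢
    exact ih s t hc hd (by simpa using hk)

theorem fin_multiset_eq_of_map_half_eq {m : ℕ} (s t : Multiset (Fin m))
    (hs : s.map (fun i : Fin m => (i : ℕ) / 2) = t.map fun i : Fin m => (i : ℕ) / 2)
    (ht : s.map (fun i : Fin m => ((i : ℕ) + 1) / 2) =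
      t.map fun i : Fin m => ((i : ℕ) + 1) / 2) : s = t := by
  refine multiset_eq_of_map_eq_map (fun i : Fin m => ?_) s t hs ht
  simp only [Fin.le_def, Fin.ext_iff]
  rcases Nat.even_or_odd (i : ℕ) with hi | hi
  · exact Or.inr fun j _ _ => by grind
  · exact Or.inl fun j _ _ => by grind

end Forest

section Expansion

variable {ι : Type*} [Fintype ι] [DecidableEq ι] {S S' : ι → Type*} [∀ i, Fintype (S i)]
  [∀ i, Fintype (S' i)]

/-- `fredholmTerm` for blocks indexed by any finite type and matrices over any field. -/
def blockFredholmTerm {K : Type*} [Field K] (A : Matrix ((i : ι) × S i) ((i : ι) × S' i) K)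
    (B : Matrix ((i : ι) × S' i) ((i : ι) × S i) K) (n : ι → ℕ) : K :=
  ((-1) ^ (∑ i, n i) / (∏ i, ((n i).factorial : K)) ^ 2) *
    ∑ w : (i : ι) → Fin (n i) → S i, ∑ w' : (i : ι) → Fin (n i) → S' i,
      (A.submatrix (Sigma.map id w) (Sigma.map id w')).det *
        (B.submatrix (Sigma.map id w') (Sigma.map id w)).det

variable {K : Type*} [Field K] [CharZero K]

theorem blockFredholmTerm_eq_sum_crossMinor [∀ i, DecidableEq (S i)] [∀ i, DecidableEq (S' i)]
    (A : Matrix ((i : ι) × S i) ((i : ι) × S' i) K)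
    (B : Matrix ((i : ι) × S' i) ((i : ι) × S i) K) (n : ι → ℕ) :
    blockFredholmTerm A B n =
      ∑ U with blockCard U = n, ∑ U' with blockCard U' = n, crossMinor A B U U' := by
  have hfact : ∏ i, ((n i).factorial : K) ≠ 0 :=
    prod_ne_zero_iff.mpr fun i _ => Nat.cast_ne_zero.mpr (n i).factorial_ne_zero
  rw [blockFredholmTerm, div_mul_eq_mul_div, div_eq_iff (pow_ne_zero 2 hfact),
    sum_block_listings_det_mul_det, mul_comm]

theorem support_blockFredholmTerm_subset (A : Matrix ((i : ι) × S i) ((i : ι) × S' i) K)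
    (B : Matrix ((i : ι) × S' i) ((i : ι) × S i) K) :
    Function.support (blockFredholmTerm A B) ⊆ Set.Iic fun i => Fintype.card (S i) := by
  classical
  intro n hn
  rw [Function.mem_support, blockFredholmTerm_eq_sum_crossMinor] at hn
  obtain ⟨U, hU, -⟩ := exists_ne_zero_of_sum_ne_zero hn
  rw [← (mem_filter.mp hU).2]
  exact fun i => card_le_univ _

-- `hcd` says that the bipartite graph with one edge from `c i` to `d i` for each block `i` is a
-- forest: the alternate edges of a cycle would form distinct `s` and `t`.
theorem fredholm_block_expansion_general [∀ i, DecidableEq (S i)] {γ δ : Type*} {c : ι → γ}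
    {d : ι → δ}
    (hcd : ∀ s t : Multiset ι, s.map c = t.map c → s.map d = t.map d → s = t)
    (A : Matrix ((i : ι) × S i) ((i : ι) × S' i) K) (B : Matrix ((i : ι) × S' i) ((i : ι) × S i) K)
    (hA : ∀ x y, c x.1 ≠ c y.1 → A x y = 0) (hB : ∀ y x, d y.1 ≠ d x.1 → B y x = 0) :
    (Function.support (blockFredholmTerm A B)).Finite ∧
      (1 - A * B).det = ∑ᶠ n, blockFredholmTerm A B n := by
  classical
  refine ⟨(Set.finite_Iic _).subset (support_blockFredholmTerm_subset A B), ?_⟩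
  calc (1 - A * B).det
    _ = ∑ U, ∑ U', crossMinor A B U U' := det_one_sub_mul_eq_sum_crossMinor A B
    _ = ∑ U, ∑ U' with blockCard U' = blockCard U, crossMinor A B U U' :=
      sum_congr rfl fun U _ => (sum_filter_of_ne fun U' _ h =>
        blockCard_eq_of_crossMinor_ne_zero hcd hA hB h).symm
    _ = ∑ n ∈ Iic fun i => Fintype.card (S i), ∑ U with blockCard U = n,
          ∑ U' with blockCard U' = blockCard U, crossMinor A B U U' :=
      (sum_fiberwise_of_maps_to (fun U _ => mem_Iic.mpr fun i => card_le_univ _) _).symm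
    _ = ∑ n ∈ Iic fun i => Fintype.card (S i), blockFredholmTerm A B n :=
      sum_congr rfl fun n _ => (sum_congr rfl fun U hU => by rw [(mem_filter.mp hU).2]).trans
        (blockFredholmTerm_eq_sum_crossMinor A B n).symm
    _ = ∑ᶠ n, blockFredholmTerm A B n :=
      (finsum_eq_sum_of_support_subset _ (by
        simpa using support_blockFredholmTerm_subset A B)).symm

end Expansion

end

/-- Block Fredholm expansion (Lemma: aux2). `Σ` is the disjoint union of the
finite sets `S_1,…,S_m` (modeled by the sigma type of `S : Fin m → Type`), and
similarly for `Σ'`; indices are 0-based, so the 1-based index of the block of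
`x : Σ` is `x.1.val + 1`. The block hypothesis for `A` says `A(w,w') = 0`
unless the 1-based block indices `p, q` of `w, w'` satisfy
`⌈p/2⌉ = ⌈q/2⌉` (i.e. both lie in `{2i−1, 2i}` for some `i`), which in 0-based
terms reads `x.1.val / 2 = y.1.val / 2`; the hypothesis for `B` says
`B(w',w) = 0` unless `⌊p/2⌋ = ⌊q/2⌋` (i.e. both lie in `{2i, 2i+1}` for some
`i`, sets with out-of-range index being empty), i.e.
`(y.1.val + 1)/2 = (x.1.val + 1)/2`. -/
theorem fredholm_block_expansion
    (m : ℕ) (hm : 1 ≤ m) (S S' : Fin m → Type)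
    [∀ i, Fintype (S i)] [∀ i, DecidableEq (S i)]
    [∀ i, Fintype (S' i)] [∀ i, DecidableEq (S' i)]
    (A : ((i : Fin m) × S i) → ((i : Fin m) × S' i) → ℂ)
    (B : ((i : Fin m) × S' i) → ((i : Fin m) × S i) → ℂ)
    (hA : ∀ x y, (x.1 : ℕ) / 2 ≠ (y.1 : ℕ) / 2 → A x y = 0)
    (hB : ∀ y x, ((y.1 : ℕ) + 1) / 2 ≠ ((x.1 : ℕ) + 1) / 2 → B y x = 0) :
    (Function.support (fredholmTerm S S' A B)).Finite ∧
    Matrix.det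
        (1 - Matrix.of fun x x' : (i : Fin m) × S i =>
          ∑ y : (i : Fin m) × S' i, A x y * B y x') =
      ∑' nn : Fin m → ℕ, fredholmTerm S S' A B nn := by
  obtain ⟨hfin, hdet⟩ := fredholm_block_expansion_general
    (fin_multiset_eq_of_map_half_eq (m := m)) (Matrix.of A) (Matrix.of B) hA hB
  exact ⟨hfin, hdet.trans (tsum_eq_finsum hfin).symm⟩
end
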